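/- arXiv:1404.0504 — 10 statements merged into one kernel-verified Lean document; each statement's English description precedes it below -/
import Mathlib

section
/- Let q = (q₁,q₂) ∈ ℂ². The binary cubic form F_{(q₁,q₂)} vanishes identically (i.e. F_{(q₁,q₂)}(λ₁,λ₂) = 0 for all λ₁, λ₂ ∈ ℂ) if and only if q₂ = 0 and q₁ ∈ {−1, 1/2 + (√3/2)i, 1/2 − (√3/2)i}. Equivalently, the Fermat cubic surface contains exactly three twistor lines, namely the fibres over the quaternions −1, 1/2 + (√3/2)i and 1/2 − (√3/2)i. -/
open Complex

/-- The restriction of the Fermat cubic `z₁³+z₂³+z₃³+z₄³` to the twistor fibre over the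
quaternion `q = q₁ + q₂·j`, as a binary cubic form in `(λ₁, λ₂)`. -/
noncomputable def fermatFibreForm (q₁ q₂ l₁ l₂ : ℂ) : ℂ :=
  (l₁ * q₁ - l₂ * (starRingEnd ℂ) q₂) ^ 3 + (l₁ * q₂ + l₂ * (starRingEnd ℂ) q₁) ^ 3
    + l₁ ^ 3 + l₂ ^ 3

/-- The binary cubic obtained by restricting the Fermat cubic to the twistor fibre over
`q = q₁ + q₂·j` vanishes identically (i.e. the fibre is a twistor line of the Fermat cubic)
if and only if `q₂ = 0` and `q₁ ∈ {−1, 1/2 + (√3/2)i, 1/2 − (√3/2)i}`. -/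
theorem fermat_twistor_lines (q₁ q₂ : ℂ) :
    (∀ l₁ l₂ : ℂ, fermatFibreForm q₁ q₂ l₁ l₂ = 0) ↔
      (q₂ = 0 ∧ (q₁ = -1 ∨ q₁ = 1 / 2 + ((Real.sqrt 3 / 2 : ℝ) : ℂ) * Complex.I ∨
        q₁ = 1 / 2 - ((Real.sqrt 3 / 2 : ℝ) : ℂ) * Complex.I)) := by
  have key : (q₁ = -1 ∨ q₁ = 1 / 2 + ((Real.sqrt 3 / 2 : ℝ) : ℂ) * Complex.I ∨
        q₁ = 1 / 2 - ((Real.sqrt 3 / 2 : ℝ) : ℂ) * Complex.I) ↔ q₁ ^ 3 + 1 = 0 := by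
    have hs : ((Real.sqrt 3 / 2 : ℝ) : ℂ) ^ 2 = 3 / 4 := by
      rw [← Complex.ofReal_pow, div_pow, Real.sq_sqrt (by norm_num)]
      push_cast
      norm_num
    generalize ((Real.sqrt 3 / 2 : ℝ) : ℂ) = s at hs ⊢
    have hf : q₁ ^ 3 + 1 = (q₁ - -1) * ((q₁ - (1 / 2 + s * Complex.I)) *
        (q₁ - (1 / 2 - s * Complex.I))) := by
      linear_combination (-(q₁ + 1)) * hs + (q₁ + 1) * s ^ 2 * Complex.I_sq
    rw [hf, mul_eq_zero, mul_eq_zero, sub_eq_zero, sub_eq_zero, sub_eq_zero]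
  rw [key]
  unfold fermatFibreForm
  constructor
  · intro h
    have h1 := h 1 0
    have h2 := congrArg (starRingEnd ℂ) (h 0 1)
    simp at h1 h2
    have h3 : q₂ ^ 3 = 0 := by linear_combination (h1 - h2) / 2
    have h4 : q₂ = 0 := pow_eq_zero_iff (by norm_num) |>.1 h3
    exact ⟨h4, by linear_combination (h1 + h2) / 2⟩
  · rintro ⟨rfl, h⟩ l₁ l₂
    have h' := congrArg (starRingEnd ℂ) h
    simp only [map_add, map_pow, map_one, map_zero] at h' ⊢
    linear_combination l₁ ^ 3 * h + l₂ ^ 3 * h'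
end

section
/- Let q = (q₁,q₂) ∈ ℂ². There exists (μ₁,μ₂) ∈ ℂ² with (μ₁,μ₂) ≠ (0,0) such that F_{(q₁,q₂)}(λ₁,λ₂) = (μ₁λ₁ + μ₂λ₂)³ for all λ₁, λ₂ ∈ ℂ if and only if q₁ = 0 and q₂⁶ = 1. Equivalently, the Fermat cubic surface has exactly six triple points under the twistor projection, namely the quaternions q₂·j where q₂ ranges over the six sixth roots of unity (i.e. ±j, ±(1/2)j ± (√3/2)k). -/
open Complex

/-- The binary cubic obtained by restricting the Fermat cubic to the twistor fibre over
`q = q₁ + q₂·j` is the cube of a nonzero linear form (i.e. `q` is a triple point of the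
Fermat cubic under the twistor projection) if and only if `q₁ = 0` and `q₂⁶ = 1`. -/
theorem fermat_triple_points (q₁ q₂ : ℂ) :
    (∃ μ₁ μ₂ : ℂ, (μ₁, μ₂) ≠ (0, 0) ∧
        ∀ l₁ l₂ : ℂ, fermatFibreForm q₁ q₂ l₁ l₂ = (μ₁ * l₁ + μ₂ * l₂) ^ 3) ↔
      (q₁ = 0 ∧ q₂ ^ 6 = 1) := by
  constructor
  · rintro ⟨m, n, hne, h⟩
    unfold fermatFibreForm at h
    have h10 := h 1 0
    have h01 := h 0 1
    have h11 := h 1 1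
    have h1m := h 1 (-1)
    clear h
    have hAA : (starRingEnd ℂ) ((starRingEnd ℂ) q₁) = q₁ := Complex.conj_conj q₁
    have hBB : (starRingEnd ℂ) ((starRingEnd ℂ) q₂) = q₂ := Complex.conj_conj q₂
    generalize hA : (starRingEnd ℂ) q₁ = A at *
    generalize hB : (starRingEnd ℂ) q₂ = B at *
    have c0 : q₁ ^ 3 + q₂ ^ 3 + 1 = m ^ 3 := by linear_combination h10
    have c3 : A ^ 3 - B ^ 3 + 1 = n ^ 3 := by linear_combination h01
    have c1 : q₂ ^ 2 * A - q₁ ^ 2 * B = m ^ 2 * n := by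
      linear_combination (h11 - h1m) / 6 - h01 / 3
    have c2 : q₁ * B ^ 2 + q₂ * A ^ 2 = m * n ^ 2 := by
      linear_combination (h11 + h1m) / 6 - h10 / 3
    have e1 : q₁ * q₂ * (q₁ * A + q₂ * B) ^ 2 + q₁ * B ^ 2 + q₂ * A ^ 2 = 0 := by
      have : (q₁ ^ 3 + q₂ ^ 3 + 1) * (q₁ * B ^ 2 + q₂ * A ^ 2)
          = (q₂ ^ 2 * A - q₁ ^ 2 * B) ^ 2 := by rw [c0, c1, c2]; ring
      linear_combination this
    have e2 : -(A * B * (q₁ * A + q₂ * B) ^ 2) + q₂ ^ 2 * A - q₁ ^ 2 * B = 0 := by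
      have : (q₂ ^ 2 * A - q₁ ^ 2 * B) * (A ^ 3 - B ^ 3 + 1)
          = (q₁ * B ^ 2 + q₂ * A ^ 2) ^ 2 := by rw [c3, c1, c2]; ring
      linear_combination this
    have e3 : (q₁ * A - q₂ * B) * (q₁ * A + q₂ * B) ^ 2
        + q₁ ^ 3 + q₂ ^ 3 + A ^ 3 - B ^ 3 + 1 = 0 := by
      have : (q₁ ^ 3 + q₂ ^ 3 + 1) * (A ^ 3 - B ^ 3 + 1)
          = (q₂ ^ 2 * A - q₁ ^ 2 * B) * (q₁ * B ^ 2 + q₂ * A ^ 2) := by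
        rw [c0, c3, c1, c2]; ring
      linear_combination this
    have f1 := congrArg (starRingEnd ℂ) e1
    have f3 := congrArg (starRingEnd ℂ) e3
    simp only [map_add, map_sub, map_mul, map_pow, map_one, map_zero, hA, hB, hAA, hBB] at f1 f3
    have hb3 : q₂ ^ 3 = B ^ 3 := by linear_combination (e3 - f3) / 2
    have hz : A * q₂ ^ 2 = 0 := by linear_combination (e2 + f1) / 2
    rcases mul_eq_zero.1 hz with h0 | h0
    · subst h0
      have ha : q₁ = 0 := by rw [← hAA, map_zero]
      subst ha
      exact ⟨rfl, by linear_combination (q₂ ^ 3 + 1) * hb3 - e3⟩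
    · exfalso
      have hb : q₂ = 0 := by simpa using h0
      subst hb
      have hB0 : B = 0 := by rw [← hB, map_zero]
      subst hB0
      have hn : (q₁ ^ 3 + 1) * (starRingEnd ℂ) (q₁ ^ 3 + 1) = 0 := by
        simp only [map_add, map_pow, map_one, hA]
        linear_combination e3
      have ha : q₁ ^ 3 + 1 = 0 := by
        rcases mul_eq_zero.1 hn with h | h
        · exact h
        · exact (map_eq_zero _).1 h
      have hA3 := congrArg (starRingEnd ℂ) ha
      simp only [map_add, map_pow, map_one, map_zero, hA] at hA3
      have hm : m ^ 3 = 0 := by linear_combination ha - c0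
      have hn' : n ^ 3 = 0 := by linear_combination hA3 - c3
      apply hne
      rw [pow_eq_zero_iff (by norm_num)] at hm hn'
      rw [hm, hn']
  · rintro ⟨rfl, h6⟩
    have hc : ∃ c : ℂ, c ^ 3 = 2 := IsAlgClosed.exists_pow_nat_eq 2 (by norm_num)
    obtain ⟨c, hc⟩ := hc
    have hc0 : c ≠ 0 := by
      rintro rfl
      norm_num at hc
    have hs : (q₂ ^ 3 - 1) * (q₂ ^ 3 + 1) = 0 := by linear_combination h6
    unfold fermatFibreForm
    rcases mul_eq_zero.1 hs with h | h
    · have hB := congrArg (starRingEnd ℂ) h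
      simp only [map_sub, map_pow, map_one, map_zero] at hB
      refine ⟨c, 0, by simpa using hc0, fun x y => ?_⟩
      rw [map_zero]
      linear_combination x ^ 3 * h - y ^ 3 * hB - x ^ 3 * hc
    · have hB := congrArg (starRingEnd ℂ) h
      simp only [map_add, map_pow, map_one, map_zero] at hB
      refine ⟨0, c, by simpa using hc0, fun x y => ?_⟩
      rw [map_zero]
      linear_combination x ^ 3 * h - y ^ 3 * hB - y ^ 3 * hc
end

section
/- Let μ be the quaternionic Möbius transformation μ(q) = (q − k)⁻¹·(−q − k), defined for quaternions q ≠ k. Then μ maps the six-element set {j, −j, (1/2)j + (√3/2)k, −(1/2)j + (√3/2)k, (1/2)j − (√3/2)k, −(1/2)j − (√3/2)k} bijectively onto the set {i, −i, (2+√3)i, −(2+√3)i, (2−√3)i, −(2−√3)i}, and maps the three-element set {−1, 1/2 + (√3/2)i, 1/2 − (√3/2)i} bijectively onto the set {k, −(√3/2)j − (1/2)k, (√3/2)j − (1/2)k}. In particular, μ(j) = i, μ(−1) = k, μ(1/2 + (√3/2)i) = −(√3/2)j − (1/2)k, and μ((1/2)j + (√3/2)k) = (2+√3)i. -/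
open Quaternion

/-- The quaternion `i`. -/
def qI : Quaternion ℝ := ⟨0, 1, 0, 0⟩
/-- The quaternion `j`. -/
def qJ : Quaternion ℝ := ⟨0, 0, 1, 0⟩
/-- The quaternion `k`. -/
def qK : Quaternion ℝ := ⟨0, 0, 0, 1⟩

/-- The quaternionic Möbius transformation `μ(q) = (q − k)⁻¹·(−q − k)`. -/
noncomputable def moebiusMu (q : Quaternion ℝ) : Quaternion ℝ := (q - qK)⁻¹ * (-q - qK)

/-- The six triple points of the Fermat cubic. -/
noncomputable def triplePts : Set (Quaternion ℝ) :=
  {qJ, -qJ, (1 / 2 : ℝ) • qJ + (Real.sqrt 3 / 2 : ℝ) • qK,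
    -((1 / 2 : ℝ) • qJ) + (Real.sqrt 3 / 2 : ℝ) • qK,
    (1 / 2 : ℝ) • qJ - (Real.sqrt 3 / 2 : ℝ) • qK,
    -((1 / 2 : ℝ) • qJ) - (Real.sqrt 3 / 2 : ℝ) • qK}

/-- The images of the six triple points. -/
noncomputable def triplePtsImage : Set (Quaternion ℝ) :=
  {qI, -qI, ((2 : ℝ) + Real.sqrt 3) • qI, -(((2 : ℝ) + Real.sqrt 3) • qI),
    ((2 : ℝ) - Real.sqrt 3) • qI, -(((2 : ℝ) - Real.sqrt 3) • qI)}

/-- The three points of `S⁴` over which the Fermat cubic contains twistor lines. -/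
noncomputable def twistorPts : Set (Quaternion ℝ) :=
  {-1, (1 / 2 : ℝ) • (1 : Quaternion ℝ) + (Real.sqrt 3 / 2 : ℝ) • qI,
    (1 / 2 : ℝ) • (1 : Quaternion ℝ) - (Real.sqrt 3 / 2 : ℝ) • qI}

/-- The images of the three twistor-line points. -/
noncomputable def twistorPtsImage : Set (Quaternion ℝ) :=
  {qK, -((Real.sqrt 3 / 2 : ℝ) • qJ) - (1 / 2 : ℝ) • qK,
    (Real.sqrt 3 / 2 : ℝ) • qJ - (1 / 2 : ℝ) • qK}

theorem qI_re : qI.re = 0 := rfl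
theorem qI_imI : qI.imI = 1 := rfl
theorem qI_imJ : qI.imJ = 0 := rfl
theorem qI_imK : qI.imK = 0 := rfl
theorem qJ_re : qJ.re = 0 := rfl
theorem qJ_imI : qJ.imI = 0 := rfl
theorem qJ_imJ : qJ.imJ = 1 := rfl
theorem qJ_imK : qJ.imK = 0 := rfl
theorem qK_re : qK.re = 0 := rfl
theorem qK_imI : qK.imI = 0 := rfl
theorem qK_imJ : qK.imJ = 0 := rfl
theorem qK_imK : qK.imK = 1 := rfl

attribute [local simp] qI_re qI_imI qI_imJ qI_imK qJ_re qJ_imI qJ_imJ qJ_imK qK_re qK_imI qK_imJ qK_imK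

theorem mu_of (q w : Quaternion ℝ) (hq : q ≠ qK) (h : (q - qK) * w = -q - qK) :
    moebiusMu q = w := by
  unfold moebiusMu
  rw [← h, inv_mul_cancel_left₀ (sub_ne_zero.2 hq)]

theorem mu_inj (p q : Quaternion ℝ) (hp : p ≠ qK) (hq : q ≠ qK)
    (h : moebiusMu p = moebiusMu q) : p = q := by
  have key : ∀ r : Quaternion ℝ, r ≠ qK → moebiusMu r = -1 - (r - qK)⁻¹ * (2 * qK) := by
    intro r hr
    have e : -r - qK = -(r - qK) - 2 * qK := by rw [two_mul]; abel
    unfold moebiusMu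
    rw [e, mul_sub, mul_neg, inv_mul_cancel₀ (sub_ne_zero.2 hr)]
  rw [key p hp, key q hq] at h
  have h2 : (2 * qK : Quaternion ℝ) ≠ 0 := by
    have : qK ≠ 0 := by
      intro h0
      have := congrArg (fun x : Quaternion ℝ => x.imK) h0
      simp [qK] at this
    rw [two_mul]
    intro h0
    have := congrArg (fun x : Quaternion ℝ => x.imK) h0
    norm_num at this
  have h3 := mul_right_cancel₀ h2 (sub_right_injective h)
  exact sub_left_injective (inv_injective h3)

theorem mu_jk (a b t : ℝ) (hb : b ≠ 1) (h1 : a * t = b + 1) (h2 : (1 - b) * t = a)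
    (q w : Quaternion ℝ) (hq : q.re = 0 ∧ q.imI = 0 ∧ q.imJ = a ∧ q.imK = b)
    (hw : w.re = 0 ∧ w.imI = t ∧ w.imJ = 0 ∧ w.imK = 0) :
    q ≠ qK ∧ moebiusMu q = w := by
  obtain ⟨q1, q2, q3, q4⟩ := hq
  obtain ⟨w1, w2, w3, w4⟩ := hw
  have hne : q ≠ qK := by
    rintro rfl
    exact hb q4.symm
  refine ⟨hne, mu_of _ _ hne ?_⟩
  ext <;> simp [q1, q2, q3, q4, w1, w2, w3, w4] <;> linarith

theorem mu_ri (a b c d : ℝ) (h1 : d = -a) (h0 : c = -b) (h2 : a * c - b * d = 0)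
    (h3 : a * d + b * c = -1)
    (q w : Quaternion ℝ) (hq : q.re = a ∧ q.imI = b ∧ q.imJ = 0 ∧ q.imK = 0)
    (hw : w.re = 0 ∧ w.imI = 0 ∧ w.imJ = c ∧ w.imK = d) :
    q ≠ qK ∧ moebiusMu q = w := by
  obtain ⟨q1, q2, q3, q4⟩ := hq
  obtain ⟨w1, w2, w3, w4⟩ := hw
  have hne : q ≠ qK := by
    rintro rfl
    simp at q4
  refine ⟨hne, mu_of _ _ hne ?_⟩
  ext <;> simp [q1, q2, q3, q4, w1, w2, w3, w4] <;> linarith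

/-- The Möbius transformation `μ(q) = (q−k)⁻¹(−q−k)` maps the six triple points of the
Fermat cubic bijectively onto `{±i, ±(2+√3)i, ±(2−√3)i}`, and maps the three twistor-line
points bijectively onto `{k, −(√3/2)j − (1/2)k, (√3/2)j − (1/2)k}`; moreover `μ(j) = i`,
`μ(−1) = k`, `μ(1/2 + (√3/2)i) = −(√3/2)j − (1/2)k` and `μ((1/2)j + (√3/2)k) = (2+√3)i`. -/
theorem moebius_maps_special_points :
    (moebiusMu '' triplePts = triplePtsImage ∧ Set.InjOn moebiusMu triplePts) ∧
    (moebiusMu '' twistorPts = twistorPtsImage ∧ Set.InjOn moebiusMu twistorPts) ∧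
    moebiusMu qJ = qI ∧
    moebiusMu (-1) = qK ∧
    moebiusMu ((1 / 2 : ℝ) • (1 : Quaternion ℝ) + (Real.sqrt 3 / 2 : ℝ) • qI) =
      -((Real.sqrt 3 / 2 : ℝ) • qJ) - (1 / 2 : ℝ) • qK ∧
    moebiusMu ((1 / 2 : ℝ) • qJ + (Real.sqrt 3 / 2 : ℝ) • qK) = ((2 : ℝ) + Real.sqrt 3) • qI := by
  have hs : Real.sqrt 3 * Real.sqrt 3 = 3 := Real.mul_self_sqrt (by norm_num)
  have hs2 : Real.sqrt 3 / 2 ≠ 1 := by intro h; nlinarith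
  have hs3 : -(Real.sqrt 3 / 2) ≠ 1 := by intro h; nlinarith
  obtain ⟨n1, m1⟩ := mu_jk 1 0 1 (by norm_num) (by norm_num) (by norm_num) qJ qI
    (by simp) (by simp)
  obtain ⟨n2, m2⟩ := mu_jk (-1) 0 (-1) (by norm_num) (by norm_num) (by norm_num) (-qJ) (-qI)
    (by refine ⟨?_, ?_, ?_, ?_⟩ <;> simp) (by refine ⟨?_, ?_, ?_, ?_⟩ <;> simp)
  obtain ⟨n3, m3⟩ := mu_jk (1/2) (Real.sqrt 3 / 2) (2 + Real.sqrt 3) (by assumption) (by nlinarith) (by nlinarith)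
    ((1 / 2 : ℝ) • qJ + (Real.sqrt 3 / 2 : ℝ) • qK) (((2 : ℝ) + Real.sqrt 3) • qI)
    (by refine ⟨?_, ?_, ?_, ?_⟩ <;> simp) (by refine ⟨?_, ?_, ?_, ?_⟩ <;> simp)
  obtain ⟨n4, m4⟩ := mu_jk (-(1/2)) (Real.sqrt 3 / 2) (-(2 + Real.sqrt 3)) (by assumption) (by nlinarith) (by nlinarith)
    (-((1 / 2 : ℝ) • qJ) + (Real.sqrt 3 / 2 : ℝ) • qK) (-(((2 : ℝ) + Real.sqrt 3) • qI))
    (by refine ⟨?_, ?_, ?_, ?_⟩ <;> simp) (by refine ⟨?_, ?_, ?_, ?_⟩ <;> simp)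
  obtain ⟨n5, m5⟩ := mu_jk (1/2) (-(Real.sqrt 3 / 2)) (2 - Real.sqrt 3) (by assumption) (by nlinarith) (by nlinarith)
    ((1 / 2 : ℝ) • qJ - (Real.sqrt 3 / 2 : ℝ) • qK) (((2 : ℝ) - Real.sqrt 3) • qI)
    (by refine ⟨?_, ?_, ?_, ?_⟩ <;> simp) (by refine ⟨?_, ?_, ?_, ?_⟩ <;> simp)
  obtain ⟨n6, m6⟩ := mu_jk (-(1/2)) (-(Real.sqrt 3 / 2)) (-(2 - Real.sqrt 3)) (by assumption) (by nlinarith) (by nlinarith)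
    (-((1 / 2 : ℝ) • qJ) - (Real.sqrt 3 / 2 : ℝ) • qK) (-(((2 : ℝ) - Real.sqrt 3) • qI))
    (by refine ⟨?_, ?_, ?_, ?_⟩ <;> simp) (by refine ⟨?_, ?_, ?_, ?_⟩ <;> simp)
  obtain ⟨n7, m7⟩ := mu_ri (-1) 0 0 1 (by norm_num) (by norm_num) (by norm_num) (by norm_num) (-1) qK (by refine ⟨?_, ?_, ?_, ?_⟩ <;> simp) (by simp)
  obtain ⟨n8, m8⟩ := mu_ri (1/2) (Real.sqrt 3 / 2) (-(Real.sqrt 3 / 2)) (-(1/2)) (by norm_num) (by norm_num)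
    (by nlinarith) (by nlinarith)
    ((1 / 2 : ℝ) • (1 : Quaternion ℝ) + (Real.sqrt 3 / 2 : ℝ) • qI) (-((Real.sqrt 3 / 2 : ℝ) • qJ) - (1 / 2 : ℝ) • qK)
    (by refine ⟨?_, ?_, ?_, ?_⟩ <;> simp) (by refine ⟨?_, ?_, ?_, ?_⟩ <;> simp)
  obtain ⟨n9, m9⟩ := mu_ri (1/2) (-(Real.sqrt 3 / 2)) (Real.sqrt 3 / 2) (-(1/2)) (by norm_num) (by norm_num)
    (by nlinarith) (by nlinarith)
    ((1 / 2 : ℝ) • (1 : Quaternion ℝ) - (Real.sqrt 3 / 2 : ℝ) • qI) ((Real.sqrt 3 / 2 : ℝ) • qJ - (1 / 2 : ℝ) • qK)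
    (by refine ⟨?_, ?_, ?_, ?_⟩ <;> simp) (by refine ⟨?_, ?_, ?_, ?_⟩ <;> simp)
  have t1 : ∀ x ∈ triplePts, x ≠ qK := by
    intro x hx
    rcases hx with rfl | rfl | rfl | rfl | rfl | rfl <;> assumption
  have t2 : ∀ x ∈ twistorPts, x ≠ qK := by
    intro x hx
    rcases hx with rfl | rfl | rfl <;> assumption
  refine ⟨⟨?_, fun x hx y hy h => mu_inj x y (t1 x hx) (t1 y hy) h⟩,
    ⟨?_, fun x hx y hy h => mu_inj x y (t2 x hx) (t2 y hy) h⟩, m1, m7, m8, m3⟩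
  · unfold triplePts triplePtsImage
    simp only [Set.image_insert_eq, Set.image_singleton, m1, m2, m3, m4, m5, m6]
  · unfold twistorPts twistorPtsImage
    simp only [Set.image_insert_eq, Set.image_singleton, m7, m8, m9]
end

section
/- For all real numbers a, b, α, β with (a,b) ≠ (0,0), writing s = a² + b², one has E₁(a/s, b/s, −α, β) = −s⁻³·E₁(a, b, α, β). In particular the zero set of E₁ is invariant under the transformation (a, b, α, β) ↦ (a/(a²+b²), b/(a²+b²), −α, β). -/
/-- The imaginary part of the equation cutting out the discriminant locus of the Fermat
cubic, in coordinates `x₁ = a cos α`, `x₂ = a sin α`, `x₃ = b cos β`, `x₄ = b sin β`. -/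
noncomputable def E₁ (a b α β : ℝ) : ℝ :=
  -2 * a ^ 3 * Real.cos (3 * β) * Real.sin (3 * α) +
    (-1 + a ^ 6 + 3 * a ^ 4 * b ^ 2 + 3 * a ^ 2 * b ^ 4 + b ^ 6) * Real.sin (3 * β)

/-- For `(a,b) ≠ (0,0)` and `s = a² + b²` one has
`E₁(a/s, b/s, −α, β) = −s⁻³·E₁(a, b, α, β)`; in particular the zero set of `E₁` is
invariant under `(a, b, α, β) ↦ (a/(a²+b²), b/(a²+b²), −α, β)`. -/
theorem E₁_inversion_neg_alpha (a b α β : ℝ) (h : (a, b) ≠ (0, 0)) :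
    E₁ (a / (a ^ 2 + b ^ 2)) (b / (a ^ 2 + b ^ 2)) (-α) β =
      -((a ^ 2 + b ^ 2) ^ 3)⁻¹ * E₁ a b α β ∧
    (E₁ a b α β = 0 → E₁ (a / (a ^ 2 + b ^ 2)) (b / (a ^ 2 + b ^ 2)) (-α) β = 0) := by
  have hs : a ^ 2 + b ^ 2 ≠ 0 := by
    intro h0
    apply h
    have ha : a = 0 := by
      have : a ^ 2 = 0 := by nlinarith [sq_nonneg a, sq_nonneg b]
      exact pow_eq_zero_iff (two_ne_zero) |>.mp this
    have hb : b = 0 := by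
      have : b ^ 2 = 0 := by nlinarith [sq_nonneg a, sq_nonneg b]
      exact pow_eq_zero_iff (two_ne_zero) |>.mp this
    rw [ha, hb]
  have hE : ∀ x y γ : ℝ, E₁ x y γ β = -2 * x ^ 3 * Real.cos (3 * β) * Real.sin (3 * γ) +
      (-1 + (x ^ 2 + y ^ 2) ^ 3) * Real.sin (3 * β) := by
    intro x y γ
    unfold E₁
    ring
  have key : E₁ (a / (a ^ 2 + b ^ 2)) (b / (a ^ 2 + b ^ 2)) (-α) β =
      -((a ^ 2 + b ^ 2) ^ 3)⁻¹ * E₁ a b α β := by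
    have h1 : (a / (a ^ 2 + b ^ 2)) ^ 2 + (b / (a ^ 2 + b ^ 2)) ^ 2 = (a ^ 2 + b ^ 2)⁻¹ := by
      field_simp
    rw [hE, hE, h1, mul_neg, Real.sin_neg]
    generalize a ^ 2 + b ^ 2 = s at hs
    field_simp
    ring
  refine ⟨key, fun h0 => ?_⟩
  rw [key, h0, mul_zero]
end

section
/- For all real numbers a, b, α, β with (a,b) ≠ (0,0), writing s = a² + b², one has E₁(a/s, b/s, α, −β) = s⁻³·E₁(a, b, α, β). In particular the zero set of E₁ is invariant under the transformation (a, b, α, β) ↦ (a/(a²+b²), b/(a²+b²), α, −β). -/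
/-- For `(a,b) ≠ (0,0)` and `s = a² + b²` one has
`E₁(a/s, b/s, α, −β) = s⁻³·E₁(a, b, α, β)`; in particular the zero set of `E₁` is
invariant under `(a, b, α, β) ↦ (a/(a²+b²), b/(a²+b²), α, −β)`. -/
theorem E₁_inversion_neg_beta (a b α β : ℝ) (h : (a, b) ≠ (0, 0)) :
    E₁ (a / (a ^ 2 + b ^ 2)) (b / (a ^ 2 + b ^ 2)) α (-β) =
      ((a ^ 2 + b ^ 2) ^ 3)⁻¹ * E₁ a b α β ∧
    (E₁ a b α β = 0 → E₁ (a / (a ^ 2 + b ^ 2)) (b / (a ^ 2 + b ^ 2)) α (-β) = 0) := by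
  have hs : a ^ 2 + b ^ 2 ≠ 0 := by
    intro h0
    apply h
    have ha : a = 0 := by nlinarith [sq_nonneg a, sq_nonneg b]
    have hb : b = 0 := by nlinarith [sq_nonneg a, sq_nonneg b]
    rw [ha, hb]
  have key : E₁ (a / (a ^ 2 + b ^ 2)) (b / (a ^ 2 + b ^ 2)) α (-β) =
      ((a ^ 2 + b ^ 2) ^ 3)⁻¹ * E₁ a b α β := by
    have hE : ∀ x y γ δ : ℝ, E₁ x y γ δ = -2 * x ^ 3 * Real.cos (3 * δ) * Real.sin (3 * γ) +
        ((x ^ 2 + y ^ 2) ^ 3 - 1) * Real.sin (3 * δ) := by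
      intro x y γ δ
      unfold E₁
      ring
    have h2 : (a / (a ^ 2 + b ^ 2)) ^ 2 + (b / (a ^ 2 + b ^ 2)) ^ 2 = (a ^ 2 + b ^ 2)⁻¹ := by
      field_simp
    rw [hE, hE, h2, mul_neg, Real.cos_neg, Real.sin_neg]
    generalize a ^ 2 + b ^ 2 = s at hs
    field_simp
    ring
  refine ⟨key, fun h0 => ?_⟩
  rw [key, h0, mul_zero]
end

section
/- For all real numbers a, b, α, β with (a,b) ≠ (0,0), writing s = a² + b², one has E₂(a/s, b/s, −α, β) = s⁻⁶·E₂(a, b, α, β). In particular the zero set of E₂ is invariant under the transformation (a, b, α, β) ↦ (a/(a²+b²), b/(a²+b²), −α, β). -/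
/-- The real part of the equation cutting out the discriminant locus of the Fermat
cubic, in coordinates `x₁ = a cos α`, `x₂ = a sin α`, `x₃ = b cos β`, `x₄ = b sin β`. -/
noncomputable def E₂ (a b α β : ℝ) : ℝ :=
  1 + 4 * a ^ 6 - 4 * b ^ 6 + 6 * a ^ 4 * b ^ 2 - 6 * a ^ 2 * b ^ 4 +
    (a ^ 12 + 6 * a ^ 10 * b ^ 2 + 15 * a ^ 8 * b ^ 4 + 20 * a ^ 6 * b ^ 6 +
      15 * a ^ 4 * b ^ 8 + 6 * a ^ 2 * b ^ 10 + b ^ 12) +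
    2 * b ^ 6 * Real.sin (6 * β) + 2 * a ^ 6 * Real.cos (6 * α) +
    4 * a ^ 3 * (1 + a ^ 6 + b ^ 6 + 3 * a ^ 4 * b ^ 2 + 3 * a ^ 2 * b ^ 4) * Real.cos (3 * α)

/-- For `(a,b) ≠ (0,0)` and `s = a² + b²` one has
`E₂(a/s, b/s, −α, β) = s⁻⁶·E₂(a, b, α, β)`; in particular the zero set of `E₂` is
invariant under `(a, b, α, β) ↦ (a/(a²+b²), b/(a²+b²), −α, β)`. -/
theorem E₂_inversion_neg_alpha (a b α β : ℝ) (h : (a, b) ≠ (0, 0)) :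
    E₂ (a / (a ^ 2 + b ^ 2)) (b / (a ^ 2 + b ^ 2)) (-α) β =
      ((a ^ 2 + b ^ 2) ^ 6)⁻¹ * E₂ a b α β ∧
    (E₂ a b α β = 0 → E₂ (a / (a ^ 2 + b ^ 2)) (b / (a ^ 2 + b ^ 2)) (-α) β = 0) := by
  have hs : a ^ 2 + b ^ 2 ≠ 0 := by
    intro h0
    apply h
    have ha : a = 0 := by nlinarith [sq_nonneg a, sq_nonneg b]
    have hb : b = 0 := by nlinarith [sq_nonneg a, sq_nonneg b]
    rw [ha, hb]
  have key : ∀ x y γ : ℝ, E₂ x y γ β = 1 + 4 * x ^ 6 - 4 * y ^ 6 + 6 * x ^ 4 * y ^ 2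
      - 6 * x ^ 2 * y ^ 4 + (x ^ 2 + y ^ 2) ^ 6 + 2 * y ^ 6 * Real.sin (6 * β)
      + 2 * x ^ 6 * Real.cos (6 * γ)
      + 4 * x ^ 3 * (1 + (x ^ 2 + y ^ 2) ^ 3) * Real.cos (3 * γ) := by
    intro x y γ
    unfold E₂
    ring
  have main : E₂ (a / (a ^ 2 + b ^ 2)) (b / (a ^ 2 + b ^ 2)) (-α) β =
      ((a ^ 2 + b ^ 2) ^ 6)⁻¹ * E₂ a b α β := by
    have hq : (a / (a ^ 2 + b ^ 2)) ^ 2 + (b / (a ^ 2 + b ^ 2)) ^ 2 = (a ^ 2 + b ^ 2)⁻¹ := by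
      field_simp
    rw [key, key, hq, mul_neg, mul_neg, Real.cos_neg, Real.cos_neg]
    generalize a ^ 2 + b ^ 2 = s at hs
    field_simp
    ring
  exact ⟨main, fun h0 => by rw [main, h0, mul_zero]⟩
end

section
/- For every (q₁,q₂) ∈ ℂ², the binary cubic F_{(q₁, e^{iπ/3}·q₂)} is degenerate if and only if F_{(q₁,q₂)} is degenerate. In other words, the discriminant locus of the Fermat cubic is invariant under the rotation of order 6 given by (q₁,q₂) ↦ (q₁, e^{iπ/3}q₂), even though this rotation is not induced by a conformal symmetry of the Fermat cubic itself. -/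
open Complex MvPolynomial

/-- The restriction of the Fermat cubic to the twistor fibre over `q = q₁ + q₂·j`,
as a homogeneous binary cubic in `ℂ[λ₁, λ₂]`. -/
noncomputable def fermatFibrePoly (q₁ q₂ : ℂ) : MvPolynomial (Fin 2) ℂ :=
  (C q₁ * X 0 - C ((starRingEnd ℂ) q₂) * X 1) ^ 3
    + (C q₂ * X 0 + C ((starRingEnd ℂ) q₁) * X 1) ^ 3 + X 0 ^ 3 + X 1 ^ 3

/-- A binary form is degenerate if it is zero or has a projective root of multiplicity at
least two, i.e. it is not squarefree in `ℂ[λ₁,λ₂]`. -/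
noncomputable def FermatDegenerate (q₁ q₂ : ℂ) : Prop := ¬ Squarefree (fermatFibrePoly q₁ q₂)

noncomputable def cubF (a0 a1 a2 a3 : ℂ) : MvPolynomial (Fin 2) ℂ :=
  C a0 * X 0 ^ 3 + 3 * C a1 * X 0 ^ 2 * X 1 + 3 * C a2 * X 0 * X 1 ^ 2 + C a3 * X 1 ^ 3

def cubD (a0 a1 a2 a3 : ℂ) : ℂ :=
  (a0 * a3 - a1 * a2) ^ 2 - 4 * (a0 * a2 - a1 ^ 2) * (a1 * a3 - a2 ^ 2)

lemma lin_not_unit (L : MvPolynomial (Fin 2) ℂ) (h0 : eval 0 L = 0) : ¬ IsUnit L := by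
  intro h
  have := h.map (eval (0 : Fin 2 → ℂ))
  rw [h0] at this
  exact not_isUnit_zero this

lemma cub_sf (a0 a1 a2 a3 : ℂ) (hD : cubD a0 a1 a2 a3 ≠ 0) :
    Squarefree (cubF a0 a1 a2 a3) := by
  rintro p ⟨g, hg⟩
  have key : ∀ i, p ∣ pderiv i (cubF a0 a1 a2 a3) := by
    intro i
    rw [hg]
    simp only [Derivation.leibniz, smul_eq_mul]
    exact ⟨p * pderiv i g + 2 * g * pderiv i p, by ring⟩
  have h3 : IsUnit (C 3 : MvPolynomial (Fin 2) ℂ) :=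
    (IsUnit.mk0 (3 : ℂ) (by norm_num)).map C
  have hDu : IsUnit (C (cubD a0 a1 a2 a3) : MvPolynomial (Fin 2) ℂ) :=
    (IsUnit.mk0 _ hD).map C
  have d3 : ∀ i, pderiv i (3 : MvPolynomial (Fin 2) ℂ) = 0 := fun i => by
    have : (3 : MvPolynomial (Fin 2) ℂ) = C 3 := (map_ofNat C 3).symm
    rw [this, pderiv_C]
  have e01 : pderiv (0 : Fin 2) (X 1 : MvPolynomial (Fin 2) ℂ) = 0 :=
    pderiv_X_of_ne (by decide)
  have e10 : pderiv (1 : Fin 2) (X 0 : MvPolynomial (Fin 2) ℂ) = 0 :=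
    pderiv_X_of_ne (by decide)
  have hP : p ∣ C a0 * X 0 ^ 2 + 2 * C a1 * X 0 * X 1 + C a2 * X 1 ^ 2 := by
    rw [← h3.dvd_mul_left]
    convert key 0 using 1
    simp only [cubF, map_add, Derivation.leibniz, Derivation.leibniz_pow, smul_eq_mul, pderiv_C,
      pderiv_X_self, e01, d3, nsmul_eq_mul, map_ofNat]
    push_cast
    ring
  have hQ : p ∣ C a1 * X 0 ^ 2 + 2 * C a2 * X 0 * X 1 + C a3 * X 1 ^ 2 := by
    rw [← h3.dvd_mul_left]
    convert key 1 using 1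
    simp only [cubF, map_add, Derivation.leibniz, Derivation.leibniz_pow, smul_eq_mul, pderiv_C,
      pderiv_X_self, e10, d3, nsmul_eq_mul, map_ofNat]
    push_cast
    ring
  obtain ⟨u, hu⟩ := hP
  obtain ⟨v, hv⟩ := hQ
  have hx : p ∣ X 0 ^ 3 := by
    rw [← hDu.dvd_mul_left]
    refine ⟨(C a0 * C a3 - C a1 * C a2) * X 0 * (C a3 * u - C a2 * v)
      - 2 * (C a1 * C a3 - C a2 ^ 2) * (2 * X 0 * (C a2 * u - C a1 * v)
        + X 1 * (C a3 * u - C a2 * v)), ?_⟩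
    simp only [cubD, map_sub, map_mul, map_pow, map_ofNat]
    linear_combination ((C a0 * C a3 - C a1 * C a2) * X 0 * C a3
      - 2 * (C a1 * C a3 - C a2 ^ 2) * (2 * X 0 * C a2 + X 1 * C a3)) * hu
      + (-(C a0 * C a3 - C a1 * C a2) * X 0 * C a2
      + 2 * (C a1 * C a3 - C a2 ^ 2) * (2 * X 0 * C a1 + X 1 * C a2)) * hv
  have hy : p ∣ X 1 ^ 3 := by
    rw [← hDu.dvd_mul_left]
    refine ⟨(C a0 * C a3 - C a1 * C a2) * X 1 * (C a0 * v - C a1 * u)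
      - 2 * (C a0 * C a2 - C a1 ^ 2) * (-2 * X 1 * (C a2 * u - C a1 * v)
        + X 0 * (C a0 * v - C a1 * u)), ?_⟩
    simp only [cubD, map_sub, map_mul, map_pow, map_ofNat]
    linear_combination (-(C a0 * C a3 - C a1 * C a2) * X 1 * C a1
      - 2 * (C a0 * C a2 - C a1 ^ 2) * (-2 * X 1 * C a2 - X 0 * C a1)) * hu
      + ((C a0 * C a3 - C a1 * C a2) * X 1 * C a0
      - 2 * (C a0 * C a2 - C a1 ^ 2) * (2 * X 1 * C a1 + X 0 * C a0)) * hv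
  have hrel : IsRelPrime (X 0 ^ 3 : MvPolynomial (Fin 2) ℂ) (X 1 ^ 3) := by
    apply IsRelPrime.pow
    have hp0 : Irreducible (X 0 : MvPolynomial (Fin 2) ℂ) := (MvPolynomial.X_prime).irreducible
    rw [hp0.isRelPrime_iff_not_dvd]
    rw [X_dvd_X]
    simp
  exact hrel hx hy

lemma cub_nsf (a0 a1 a2 a3 : ℂ) (hD : cubD a0 a1 a2 a3 = 0) :
    ¬ Squarefree (cubF a0 a1 a2 a3) := by
  intro hs
  have aux : ∀ (c : ℂ) (L M : MvPolynomial (Fin 2) ℂ), c ≠ 0 → eval 0 L = 0 →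
      C c * cubF a0 a1 a2 a3 = L * L * M → False := by
    intro c L M hc hL h
    apply lin_not_unit L hL
    apply hs
    rw [← ((IsUnit.mk0 c hc).map (C (σ := Fin 2))).dvd_mul_left]
    exact ⟨M, h⟩
  by_cases hH : a0 * a2 - a1 ^ 2 = 0
  · have h1 : a0 * a3 - a1 * a2 = 0 := by
      unfold cubD at hD
      rw [hH] at hD
      simpa using hD
    by_cases h0 : a0 = 0
    · subst h0
      have h2 : a1 = 0 := by simpa using hH
      subst h2
      exact aux 1 (X 1) (3 * C a2 * X 0 + C a3 * X 1) one_ne_zero (by simp)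
        (by simp only [cubF, map_zero, map_one]; ring)
    · have k0 := congrArg (C (σ := Fin 2)) hH
      have k1 := congrArg (C (σ := Fin 2)) h1
      simp only [map_sub, map_mul, map_pow, map_zero] at k0 k1
      refine aux (a0 ^ 2) (C a0 * X 0 + C a1 * X 1) (C a0 * X 0 + C a1 * X 1)
        (pow_ne_zero _ h0) (by simp) ?_
      simp only [cubF, map_pow]
      linear_combination (3 * C a0 * X 0 * X 1 ^ 2 + C a1 * X 1 ^ 3) * k0 + C a0 * X 1 ^ 3 * k1
  · have k := congrArg (C (σ := Fin 2)) hD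
    simp only [cubD, map_sub, map_mul, map_pow, map_zero, map_ofNat] at k
    refine aux (4 * (a0 * a2 - a1 ^ 2) ^ 3)
      (2 * (C a0 * C a2 - C a1 ^ 2) * X 0 + (C a0 * C a3 - C a1 * C a2) * X 1)
      ((C a0 * C a2 - C a1 ^ 2) * C a0 * X 0 + (3 * C a1 * (C a0 * C a2 - C a1 ^ 2)
        - (C a0 * C a3 - C a1 * C a2) * C a0) * X 1)
      (mul_ne_zero (by norm_num) (pow_ne_zero _ hH)) (by simp) ?_
    simp only [cubF, map_pow, map_mul, map_sub, map_ofNat]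
    linear_combination (3 * (C a0 * C a2 - C a1 ^ 2) * C a0 * X 0 * X 1 ^ 2 +
      (C a1 * (C a0 * C a2 - C a1 ^ 2) + (C a0 * C a3 - C a1 * C a2) * C a0) * X 1 ^ 3) * k

lemma deg_iff (a b : ℂ) : FermatDegenerate a b ↔
    cubD (a ^ 3 + b ^ 3 + 1)
      (-a ^ 2 * (starRingEnd ℂ) b + b ^ 2 * (starRingEnd ℂ) a)
      (a * (starRingEnd ℂ) b ^ 2 + b * (starRingEnd ℂ) a ^ 2)
      ((starRingEnd ℂ) a ^ 3 - (starRingEnd ℂ) b ^ 3 + 1) = 0 := by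
  have : fermatFibrePoly a b = cubF (a ^ 3 + b ^ 3 + 1)
      (-a ^ 2 * (starRingEnd ℂ) b + b ^ 2 * (starRingEnd ℂ) a)
      (a * (starRingEnd ℂ) b ^ 2 + b * (starRingEnd ℂ) a ^ 2)
      ((starRingEnd ℂ) a ^ 3 - (starRingEnd ℂ) b ^ 3 + 1) := by
    simp only [fermatFibrePoly, cubF, C_add, C_sub, C_mul, C_neg, C_pow, C_1]
    ring
  rw [FermatDegenerate, this]
  constructor
  · intro h
    by_contra h'
    exact h (cub_sf _ _ _ _ h')
  · exact cub_nsf _ _ _ _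

lemma cubD_exp (a A b B s t u : ℂ) (hs : b ^ 3 = s) (ht : B ^ 3 = t) (hu : b * B = u) :
    cubD (a ^ 3 + b ^ 3 + 1) (-a ^ 2 * B + b ^ 2 * A)
      (a * B ^ 2 + b * A ^ 2) (A ^ 3 - B ^ 3 + 1) =
    ((a ^ 3 + s + 1) * (A ^ 3 - t + 1)) ^ 2
      - 6 * ((a ^ 3 + s + 1) * (A ^ 3 - t + 1))
        * (-a ^ 3 * t - a ^ 2 * A ^ 2 * u + a * A * u ^ 2 + A ^ 3 * s)
      - 3 * (-a ^ 3 * t - a ^ 2 * A ^ 2 * u + a * A * u ^ 2 + A ^ 3 * s) ^ 2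
      + 4 * (a ^ 3 + s + 1) * (a ^ 3 * t ^ 2 + 3 * a ^ 2 * A ^ 2 * u * t
        + 3 * a * A ^ 4 * u ^ 2 + A ^ 6 * s)
      + 4 * (A ^ 3 - t + 1) * (-a ^ 6 * t + 3 * a ^ 4 * A * u ^ 2
        - 3 * a ^ 2 * A ^ 2 * u * s + A ^ 3 * s ^ 2) := by
  subst hs ht hu
  unfold cubD
  ring

lemma cubD_conj (a A b B : ℂ) (hA : (starRingEnd ℂ) a = A) (hB : (starRingEnd ℂ) b = B) :
    cubD (a ^ 3 + (-b) ^ 3 + 1) (-a ^ 2 * (-B) + (-b) ^ 2 * A)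
      (a * (-B) ^ 2 + (-b) * A ^ 2) (A ^ 3 - (-B) ^ 3 + 1) =
    (starRingEnd ℂ) (cubD (a ^ 3 + b ^ 3 + 1) (-a ^ 2 * B + b ^ 2 * A)
      (a * B ^ 2 + b * A ^ 2) (A ^ 3 - B ^ 3 + 1)) := by
  have hA' : (starRingEnd ℂ) A = a := by rw [← hA, Complex.conj_conj]
  have hB' : (starRingEnd ℂ) B = b := by rw [← hB, Complex.conj_conj]
  simp only [cubD, map_sub, map_add, map_mul, map_pow, map_neg, map_one, map_ofNat,
    hA, hB, hA', hB']
  ring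

/-- The discriminant locus of the Fermat cubic is invariant under the order six rotation
`(q₁,q₂) ↦ (q₁, e^{iπ/3}q₂)`. -/
theorem fermat_discriminant_order_six_symmetry (q₁ q₂ : ℂ) :
    FermatDegenerate q₁ (Complex.exp (Real.pi * Complex.I / 3) * q₂) ↔
      FermatDegenerate q₁ q₂ := by
  have h3 : Complex.exp (Real.pi * Complex.I / 3) ^ 3 = -1 := by
    rw [← Complex.exp_nat_mul, ← Complex.exp_pi_mul_I]
    congr 1
    push_cast
    ring
  have hn : Complex.exp (Real.pi * Complex.I / 3) *
      (starRingEnd ℂ) (Complex.exp (Real.pi * Complex.I / 3)) = 1 := by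
    rw [← Complex.exp_conj, ← Complex.exp_add]
    simp [map_div₀, neg_div, Complex.conj_ofNat]
  have h3' := congrArg (starRingEnd ℂ) h3
  generalize Complex.exp (Real.pi * Complex.I / 3) = z at *
  simp only [map_pow, map_neg, map_one] at h3'
  rw [deg_iff, deg_iff, map_mul]
  generalize (starRingEnd ℂ) z = w at *
  have e1 : (z * q₂) ^ 3 = (-q₂) ^ 3 := by
    linear_combination q₂ ^ 3 * h3
  have e2 : (w * (starRingEnd ℂ) q₂) ^ 3 = (-(starRingEnd ℂ) q₂) ^ 3 := by
    linear_combination (starRingEnd ℂ) q₂ ^ 3 * h3'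
  have e3 : z * q₂ * (w * (starRingEnd ℂ) q₂) = (-q₂) * (-(starRingEnd ℂ) q₂) := by
    linear_combination q₂ * (starRingEnd ℂ) q₂ * hn
  rw [cubD_exp _ _ _ _ _ _ _ e1 e2 e3, ← cubD_exp _ _ _ _ _ _ _ rfl rfl rfl,
    cubD_conj _ _ _ _ rfl rfl, map_eq_zero]
end

section
/- For every (q₁,q₂) ∈ ℂ² with (q₁,q₂) ≠ (0,0), writing s = |q₁|² + |q₂|², the binary cubic F_{(conj(q₁)/s, q₂/s)} is degenerate if and only if F_{(q₁,q₂)} is degenerate, and likewise F_{(q₁/s, conj(q₂)/s)} is degenerate if and only if F_{(q₁,q₂)} is degenerate. In other words, the discriminant locus of the Fermat cubic is invariant under these two inversive conformal transformations of ℝ⁴ ∪ {∞}. -/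
open Complex MvPolynomial

theorem sqf_equiv {R S : Type*} [CommRing R] [CommRing S] (e : R ≃+* S) (p : R) :
    Squarefree p ↔ Squarefree (e p) := by
  constructor
  · intro hp x hx
    have h1 : e.symm x * e.symm x ∣ p := by
      have := map_dvd e.symm hx
      simpa using this
    have h2 := (hp _ h1).map e
    simpa using h2
  · intro hp x hx
    have h1 : e x * e x ∣ e p := by
      have := map_dvd e hx
      simpa using this
    have h2 := (hp _ h1).map e.symm
    simpa using h2

theorem deg_conj (q₁ q₂ : ℂ) :
    FermatDegenerate ((starRingEnd ℂ) q₁) ((starRingEnd ℂ) q₂) ↔ FermatDegenerate q₁ q₂ := by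
  unfold FermatDegenerate
  rw [sqf_equiv (MvPolynomial.mapEquiv (Fin 2) (starRingAut (R := ℂ))) (fermatFibrePoly q₁ q₂)]
  have : MvPolynomial.mapEquiv (Fin 2) (starRingAut (R := ℂ)) (fermatFibrePoly q₁ q₂)
      = fermatFibrePoly ((starRingEnd ℂ) q₁) ((starRingEnd ℂ) q₂) := by
    simp [fermatFibrePoly, MvPolynomial.mapEquiv_apply]
  rw [this]

theorem deg_swap (q₁ q₂ : ℂ) :
    FermatDegenerate ((starRingEnd ℂ) q₁) ((starRingEnd ℂ) q₂) ↔ FermatDegenerate q₁ (-q₂) := by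
  unfold FermatDegenerate
  rw [sqf_equiv (MvPolynomial.renameEquiv ℂ (Equiv.swap (0 : Fin 2) 1)).toRingEquiv
    (fermatFibrePoly q₁ (-q₂))]
  have : (MvPolynomial.renameEquiv ℂ (Equiv.swap (0 : Fin 2) 1)).toRingEquiv
      (fermatFibrePoly q₁ (-q₂))
      = fermatFibrePoly ((starRingEnd ℂ) q₁) ((starRingEnd ℂ) q₂) := by
    simp [fermatFibrePoly]
    ring
  rw [this]

theorem deg_neg (q₁ q₂ : ℂ) : FermatDegenerate q₁ (-q₂) ↔ FermatDegenerate q₁ q₂ :=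
  (deg_swap q₁ q₂).symm.trans (deg_conj q₁ q₂)

noncomputable def linSub (a b c d : ℂ) : MvPolynomial (Fin 2) ℂ →ₐ[ℂ] MvPolynomial (Fin 2) ℂ :=
  aeval ![C a * X 0 + C b * X 1, C c * X 0 + C d * X 1]

theorem linSub_comp (a b c d a' b' c' d' : ℂ) (h1 : a * a' + b * c' = 1) (h2 : a * b' + b * d' = 0)
    (h3 : c * a' + d * c' = 0) (h4 : c * b' + d * d' = 1) :
    (linSub a' b' c' d').comp (linSub a b c d) = AlgHom.id ℂ _ := by
  apply MvPolynomial.algHom_ext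
  intro i
  fin_cases i
  · simp [linSub, algebraMap_eq]
    have e1 := congrArg (C : ℂ → MvPolynomial (Fin 2) ℂ) h1
    have e2 := congrArg (C : ℂ → MvPolynomial (Fin 2) ℂ) h2
    simp only [C_add, C_mul, C_0, C_1] at e1 e2
    linear_combination (X 0) * e1 + X 1 * e2
  · simp [linSub, algebraMap_eq]
    have e1 := congrArg (C : ℂ → MvPolynomial (Fin 2) ℂ) h3
    have e2 := congrArg (C : ℂ → MvPolynomial (Fin 2) ℂ) h4
    simp only [C_add, C_mul, C_0, C_1] at e1 e2
    linear_combination (X 0) * e1 + X 1 * e2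

theorem deg_inv (q₁ q₂ s : ℂ) (hs : s ≠ 0) (hc : (starRingEnd ℂ) s = s)
    (hq : q₁ * (starRingEnd ℂ) q₁ + q₂ * (starRingEnd ℂ) q₂ = s) :
    FermatDegenerate ((starRingEnd ℂ) q₁ / s) (-(q₂ / s)) ↔ FermatDegenerate q₁ q₂ := by
  unfold FermatDegenerate
  set r₁ := (starRingEnd ℂ) q₁ with hr₁
  set r₂ := (starRingEnd ℂ) q₂ with hr₂
  have A : (linSub q₁ (-r₂) q₂ r₁).comp (linSub (r₁ / s) (r₂ / s) (-(q₂ / s)) (q₁ / s))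
      = AlgHom.id ℂ _ := by
    apply linSub_comp <;> field_simp <;> first | linear_combination hq | ring
  have B : (linSub (r₁ / s) (r₂ / s) (-(q₂ / s)) (q₁ / s)).comp (linSub q₁ (-r₂) q₂ r₁)
      = AlgHom.id ℂ _ := by
    apply linSub_comp <;> field_simp <;> first | linear_combination hq | ring
  rw [sqf_equiv (AlgEquiv.ofAlgHom _ _ A B).toRingEquiv (fermatFibrePoly (r₁ / s) (-(q₂ / s)))]
  have e0 := DFunLike.congr_fun A (X 0)
  have e1 := DFunLike.congr_fun A (X 1)
  have : (AlgEquiv.ofAlgHom _ _ A B).toRingEquiv (fermatFibrePoly (r₁ / s) (-(q₂ / s)))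
      = fermatFibrePoly q₁ q₂ := by
    simp [linSub, algebraMap_eq] at e0 e1
    simp [fermatFibrePoly, linSub, hc, ← hr₁, ← hr₂, algebraMap_eq]
    have hr₁' : (starRingEnd ℂ) r₁ = q₁ := by simp [hr₁]
    rw [hr₁']
    rw [sub_eq_add_neg] at *
    rw [e0, e1]
    ring
  rw [this]

/-- With `s = |q₁|² + |q₂|²`, the discriminant locus of the Fermat cubic is invariant
under the inversive conformal transformations `(q₁,q₂) ↦ (conj(q₁)/s, q₂/s)` and
`(q₁,q₂) ↦ (q₁/s, conj(q₂)/s)` of `ℝ⁴ ∪ {∞}`. -/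
theorem fermat_discriminant_inversion_symmetry (q₁ q₂ : ℂ) (h : (q₁, q₂) ≠ (0, 0)) :
    (FermatDegenerate ((starRingEnd ℂ) q₁ / ((Complex.normSq q₁ + Complex.normSq q₂ : ℝ) : ℂ))
        (q₂ / ((Complex.normSq q₁ + Complex.normSq q₂ : ℝ) : ℂ)) ↔
      FermatDegenerate q₁ q₂) ∧
    (FermatDegenerate (q₁ / ((Complex.normSq q₁ + Complex.normSq q₂ : ℝ) : ℂ))
        ((starRingEnd ℂ) q₂ / ((Complex.normSq q₁ + Complex.normSq q₂ : ℝ) : ℂ)) ↔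
      FermatDegenerate q₁ q₂) := by
  set s : ℂ := ((Complex.normSq q₁ + Complex.normSq q₂ : ℝ) : ℂ) with hsd
  have hc : (starRingEnd ℂ) s = s := Complex.conj_ofReal _
  have hq : q₁ * (starRingEnd ℂ) q₁ + q₂ * (starRingEnd ℂ) q₂ = s := by
    rw [Complex.mul_conj, Complex.mul_conj, hsd]; push_cast; rfl
  have hs : s ≠ 0 := by
    intro h0
    rw [hsd, Complex.ofReal_eq_zero] at h0
    have h1 := Complex.normSq_nonneg q₁
    have h2 := Complex.normSq_nonneg q₂
    apply h
    rw [Prod.mk.injEq, ← Complex.normSq_eq_zero, ← Complex.normSq_eq_zero]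
    constructor <;> linarith
  have key := (deg_neg _ _).symm.trans (deg_inv q₁ q₂ s hs hc hq)
  refine ⟨key, ?_⟩
  rw [← key, ← deg_conj ((starRingEnd ℂ) q₁ / s)]
  simp [hc]
end

section
/- Let T ⊂ ℝ⁴ be the three-point set {(cos(π/3), sin(π/3), 0, 0), (−1, 0, 0, 0), (cos(π/3), −sin(π/3), 0, 0)} (a regular triangle in the plane spanned by the first two coordinates) and let H ⊂ ℝ⁴ be the six-point set {(0, 0, cos(kπ/3), sin(kπ/3)) : k = 0, 1, 2, 3, 4, 5} (a regular hexagon in the plane spanned by the last two coordinates). Then the subgroup of the orthogonal group O(4, ℝ) consisting of those orthogonal transformations A with A(T) = T and A(H) = H is isomorphic, as a group, to the direct product D₃ × D₆ of the dihedral group of order 6 and the dihedral group of order 12; in particular it has order 72. -/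
open Real

/-- The regular triangle in the plane spanned by the first two coordinates: the images of
the three twistor lines of the Fermat cubic. -/
noncomputable def twistorTriangle : Set (Fin 4 → ℝ) :=
  {![Real.cos (π / 3), Real.sin (π / 3), 0, 0], ![-1, 0, 0, 0],
    ![Real.cos (π / 3), -Real.sin (π / 3), 0, 0]}

/-- The regular hexagon in the plane spanned by the last two coordinates: the six triple
points of the Fermat cubic. -/
noncomputable def tripleHexagon : Set (Fin 4 → ℝ) :=
  {v | ∃ k : Fin 6, v = ![0, 0, Real.cos ((k : ℕ) * π / 3), Real.sin ((k : ℕ) * π / 3)]}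

namespace DL

/-- twice the cosine -/
def c : Fin 6 → ℤ := ![2, 1, -1, -2, -1, 1]
/-- twice the sine over root three -/
def s : Fin 6 → ℤ := ![0, 1, 1, 0, -1, -1]

def C : DihedralGroup 6 → ℤ
  | .r i => c i
  | .sr i => c i
def S : DihedralGroup 6 → ℤ
  | .r i => s i
  | .sr i => s i
def E : DihedralGroup 6 → ℤ
  | .r _ => 1
  | .sr _ => -1

def f : Fin 3 → Fin 6 := ![0, 2, 4]
def g : Fin 3 → Fin 6 := ![1, 3, 5]

def J : DihedralGroup 3 → DihedralGroup 6
  | .r i => .r (f i)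
  | .sr i => .sr (f i)

lemma J_mul : ∀ a b, J (a * b) = J a * J b := by decide +kernel
lemma J_one : J 1 = 1 := by decide +kernel
lemma J_inj : ∀ a b, J a = J b → a = b := by decide +kernel

lemma law1 : ∀ d e, 2 * C (d * e) = C d * C e - 3 * S d * E e * S e := by decide +kernel
lemma law2 : ∀ d e, 2 * S (d * e) = C d * S e + S d * E e * C e := by decide +kernel
lemma law3 : ∀ d e, 2 * (E (d * e) * S (d * e)) = E d * S d * C e + E d * C d * E e * S e := by
  decide +kernel
lemma law4 : ∀ d e, 2 * (E (d * e) * C (d * e)) = -3 * E d * S d * S e + E d * C d * E e * C e := by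
  decide +kernel
lemma norm1 : ∀ d, C d * C d + 3 * S d * S d = 4 := by decide +kernel
lemma norm2 : ∀ d, E d * E d = 1 := by decide +kernel
lemma ECS_inj : ∀ d e, C d = C e → S d = S e → E d * C d = E e * C e →
    E d * S d = E e * S e → d = e := by decide +kernel

lemma actH : ∀ d k, ∃ j, C d * c k - 3 * S d * s k = 2 * c j ∧
    E d * S d * c k + E d * C d * s k = 2 * s j := by decide +kernel
lemma actT : ∀ d k, ∃ j, C (J d) * c (g k) - 3 * S (J d) * s (g k) = 2 * c (g j) ∧
    E (J d) * S (J d) * c (g k) + E (J d) * C (J d) * s (g k) = 2 * s (g j) := by decide +kernel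

/-- columns recovered from the images of vertices: hexagon -/
lemma convH : ∀ i j k, c j - c i = c k → s j - s i = s k → ∃ d,
    C d = c i ∧ E d * S d = s i ∧ -3 * S d = 2 * c j - c i ∧ E d * C d = 2 * s j - s i := by
  decide +kernel
lemma convT : ∀ i j k, c (g i) + c (g j) + c (g k) = 0 → s (g i) + s (g j) + s (g k) = 0 → ∃ d,
    C (J d) = - c (g j) ∧ E (J d) * S (J d) = - s (g j) ∧
    - 3 * S (J d) = c (g i) - c (g k) ∧ E (J d) * C (J d) = s (g i) - s (g k) := by
  decide +kernel

noncomputable def w : ℝ := √3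
lemma ww : w * w = 3 := Real.mul_self_sqrt (by norm_num)
lemma w0 : w ≠ 0 := by unfold w; positivity

noncomputable def tv (k : Fin 3) : Fin 4 → ℝ := ![(c (g k) : ℝ) / 2, (s (g k) : ℝ) / 2 * w, 0, 0]
noncomputable def hv (k : Fin 6) : Fin 4 → ℝ := ![0, 0, (c k : ℝ) / 2, (s k : ℝ) / 2 * w]

lemma T_eq : twistorTriangle = Set.range tv := by
  ext v
  simp only [twistorTriangle, Set.mem_insert_iff, Set.mem_singleton_iff, Set.mem_range,
    Fin.exists_fin_succ, tv, c, s, g, w, Real.cos_pi_div_three, Real.sin_pi_div_three]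
  simp [eq_comm, neg_div, div_eq_inv_mul (√3) 2]

lemma hv_eq (k : Fin 6) :
    ![0, 0, Real.cos ((k : ℕ) * π / 3), Real.sin ((k : ℕ) * π / 3)] = hv k := by
  have h2 : (2 * π / 3) = π - π / 3 := by ring
  have h3 : (3 * π / 3) = π := by ring
  have h4 : (4 * π / 3) = π / 3 + π := by ring
  have h5 : (5 * π / 3) = 2 * π - π / 3 := by ring
  fin_cases k <;>
  simp [hv, c, s, w, h2, h3, h4, h5, neg_div, Real.cos_pi_sub, Real.sin_pi_sub, Real.cos_add_pi, Real.sin_add_pi,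
    Real.cos_two_pi_sub, Real.sin_two_pi_sub, div_eq_inv_mul (√3) 2]

lemma H_eq : tripleHexagon = Set.range hv := by
  ext v
  simp only [tripleHexagon, Set.mem_ofPred_eq, hv_eq, Set.mem_range, eq_comm]

noncomputable def M (x : DihedralGroup 3 × DihedralGroup 6) : Matrix (Fin 4) (Fin 4) ℝ :=
  !![(C (J x.1) : ℝ) / 2, -((S (J x.1) : ℝ) / 2 * w), 0, 0;
     (E (J x.1) : ℝ) * S (J x.1) / 2 * w, (E (J x.1) : ℝ) * C (J x.1) / 2, 0, 0;
     0, 0, (C x.2 : ℝ) / 2, -((S x.2 : ℝ) / 2 * w);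
     0, 0, (E x.2 : ℝ) * S x.2 / 2 * w, (E x.2 : ℝ) * C x.2 / 2]

lemma M_mul (x y) : M (x * y) = M x * M y := by
  obtain ⟨a, b⟩ := x
  obtain ⟨a', b'⟩ := y
  have e1 (d e) : (C (d * e) : ℝ) = (C d * C e - 3 * S d * E e * S e) / 2 := by
    have := congrArg (Int.cast (R := ℝ)) (law1 d e)
    push_cast at this; linarith
  have e2 (d e) : (S (d * e) : ℝ) = (C d * S e + S d * E e * C e) / 2 := by
    have := congrArg (Int.cast (R := ℝ)) (law2 d e)
    push_cast at this; linarith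
  have e3 (d e) : (E (d * e) * S (d * e) : ℝ) = (E d * S d * C e + E d * C d * E e * S e) / 2 := by
    have := congrArg (Int.cast (R := ℝ)) (law3 d e)
    push_cast at this; linarith
  have e4 (d e) : (E (d * e) * C (d * e) : ℝ) = (-3 * E d * S d * S e + E d * C d * E e * C e) / 2 := by
    have := congrArg (Int.cast (R := ℝ)) (law4 d e)
    push_cast at this; linarith
  simp only [M, Prod.mk_mul_mk, J_mul, e3, e4, e1, e2]
  ext i j
  fin_cases i <;> fin_cases j <;> simp [Matrix.mul_apply, Fin.sum_univ_four] <;> grind [ww]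

lemma M_one : M 1 = 1 := by
  have h1 : C 1 = 2 := by decide
  have h2 : S 1 = 0 := by decide
  have h3 : E 1 = 1 := by decide
  ext i j
  fin_cases i <;> fin_cases j <;> simp [M, J_one, h1, h2, h3]

lemma M_orth (x) : M x ∈ Matrix.orthogonalGroup (Fin 4) ℝ := by
  rw [Matrix.mem_orthogonalGroup_iff]
  have e1 (d) : (C d * C d + 3 * S d * S d : ℝ) = 4 := mod_cast norm1 d
  have e2 (d) : (E d * E d : ℝ) = 1 := mod_cast norm2 d
  have a1 := e1 (J x.1)
  have a2 := e1 x.2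
  have a3 := e2 (J x.1)
  have a4 := e2 x.2
  have := ww
  ext i j
  fin_cases i <;> fin_cases j <;> simp [M, Matrix.mul_apply, Fin.sum_univ_four, Matrix.star_eq_conjTranspose] <;> grind

noncomputable def φ : DihedralGroup 3 × DihedralGroup 6 →* Matrix.orthogonalGroup (Fin 4) ℝ where
  toFun x := ⟨M x, M_orth x⟩
  map_one' := Subtype.ext M_one
  map_mul' x y := Subtype.ext (M_mul x y)

lemma φ_inj : Function.Injective φ := by
  intro x y h
  have h : M x = M y := congrArg Subtype.val h
  have hh (i j) : M x i j = M y i j := by rw [h]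
  have w0 := w0
  have key (d e : DihedralGroup 6) (h1 : (C d : ℝ) / 2 = C e / 2)
      (h2 : -((S d : ℝ) / 2 * w) = -(S e / 2 * w))
      (h3 : (E d * S d : ℝ) / 2 * w = E e * S e / 2 * w)
      (h4 : (E d * C d : ℝ) / 2 = E e * C e / 2) : d = e := by
    apply ECS_inj
    · have : (C d : ℝ) = C e := by linarith
      exact mod_cast this
    · have : (S d : ℝ) = S e := by
        have := mul_right_cancel₀ w0 (neg_injective h2)
        linarith
      exact mod_cast this
    · have : (E d * C d : ℝ) = E e * C e := by linarith
      exact mod_cast this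
    · have : (E d * S d : ℝ) = E e * S e := by
        have := mul_right_cancel₀ w0 h3
        linarith
      exact mod_cast this
  apply Prod.ext
  · exact J_inj _ _ (key _ _ (hh 0 0) (hh 0 1) (hh 1 0) (hh 1 1))
  · exact key _ _ (hh 2 2) (hh 2 3) (hh 3 2) (hh 3 3)

lemma M_tv (x k) : ∃ j, (M x).mulVec (tv k) = tv j := by
  obtain ⟨j, h1, h2⟩ := actT x.1 k
  refine ⟨j, ?_⟩
  have h1 := congrArg (Int.cast (R := ℝ)) h1
  have h2 := congrArg (Int.cast (R := ℝ)) h2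
  push_cast at h1 h2
  have := ww
  ext i
  fin_cases i <;> simp [M, tv, Matrix.mulVec, dotProduct, Fin.sum_univ_four] <;> grind

lemma M_hv (x k) : ∃ j, (M x).mulVec (hv k) = hv j := by
  obtain ⟨j, h1, h2⟩ := actH x.2 k
  refine ⟨j, ?_⟩
  have h1 := congrArg (Int.cast (R := ℝ)) h1
  have h2 := congrArg (Int.cast (R := ℝ)) h2
  push_cast at h1 h2
  have := ww
  ext i
  fin_cases i <;> simp [M, hv, Matrix.mulVec, dotProduct, Fin.sum_univ_four] <;> grind

lemma image_eq {ι : Type} (v : ι → Fin 4 → ℝ) (h : ∀ x k, ∃ j, (M x).mulVec (v k) = v j) (x) :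
    (fun u => (M x).mulVec u) '' Set.range v = Set.range v := by
  apply subset_antisymm
  · rintro _ ⟨_, ⟨k, rfl⟩, rfl⟩
    obtain ⟨j, hj⟩ := h x k
    exact ⟨j, hj.symm⟩
  · rintro _ ⟨k, rfl⟩
    obtain ⟨j, hj⟩ := h x⁻¹ k
    refine ⟨v j, ⟨j, rfl⟩, ?_⟩
    simp [← hj, Matrix.mulVec_mulVec, ← M_mul, M_one]

lemma conv (A : Matrix (Fin 4) (Fin 4) ℝ) (hT : ∀ k, ∃ j, A.mulVec (tv k) = tv j)
    (hH : ∀ k, ∃ j, A.mulVec (hv k) = hv j) : ∃ x, M x = A := by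
  have ww := ww
  have w0 := w0
  obtain ⟨i, hi⟩ := hT 0
  obtain ⟨j, hj⟩ := hT 1
  obtain ⟨k, hk⟩ := hT 2
  obtain ⟨i', hi'⟩ := hH 0
  obtain ⟨j', hj'⟩ := hH 1
  obtain ⟨k', hk'⟩ := hH 2
  have ei (r) := congrFun hi r
  have ej (r) := congrFun hj r
  have ek (r) := congrFun hk r
  have ei' (r) := congrFun hi' r
  have ej' (r) := congrFun hj' r
  have ek' (r) := congrFun hk' r
  have t0 : tv 0 = ![1 / 2, 1 / 2 * w, 0, 0] := by simp [tv, c, s, g]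
  have t1 : tv 1 = ![-1, 0, 0, 0] := by simp [tv, c, s, g]
  have t2 : tv 2 = ![1 / 2, -1 / 2 * w, 0, 0] := by simp [tv, c, s, g]
  have h0 : hv 0 = ![0, 0, 1, 0] := by simp [hv, c, s]
  have h1 : hv 1 = ![0, 0, 1 / 2, 1 / 2 * w] := by simp [hv, c, s]
  have h2 : hv 2 = ![0, 0, -1 / 2, 1 / 2 * w] := by simp [hv, c, s]
  simp only [t0, t1, t2, h0, h1, h2, Matrix.mulVec, dotProduct, Fin.sum_univ_four,
    Matrix.cons_val] at ei ej ek ei' ej' ek'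
  have sumT (r) : tv i r + tv j r + tv k r = 0 := by linarith [ei r, ej r, ek r]
  have sumH (r) : hv j' r - hv i' r = hv k' r := by linarith [ei' r, ej' r, ek' r]
  have col0 (r) : A r 0 = - tv j r := by linarith [ej r]
  have col1 (r) : A r 1 = (tv i r - tv k r) * w / 3 := by grind
  have col2 (r) : A r 2 = hv i' r := by linarith [ei' r]
  have col3 (r) : A r 3 = (2 * hv j' r - hv i' r) * w / 3 := by grind
  obtain ⟨d, d1, d2, d3, d4⟩ := convT i j k
    (by
      have : (c (g i) + c (g j) + c (g k) : ℝ) = 0 := by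
        have := sumT 0
        simp [tv] at this
        linarith
      exact mod_cast this)
    (by
      have : (s (g i) + s (g j) + s (g k) : ℝ) = 0 := by
        have := sumT 1
        simp [tv] at this
        apply mul_right_cancel₀ w0
        linarith
      exact mod_cast this)
  obtain ⟨e, e1, e2, e3, e4⟩ := convH i' j' k'
    (by
      have : (c j' - c i' : ℝ) = c k' := by
        have := sumH 2
        simp [hv] at this
        linarith
      exact mod_cast this)
    (by
      have : (s j' - s i' : ℝ) = s k' := by
        have := sumH 3
        simp [hv] at this
        apply mul_right_cancel₀ w0
        linarith
      exact mod_cast this)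
  have d1 := congrArg (Int.cast (R := ℝ)) d1
  have d2 := congrArg (Int.cast (R := ℝ)) d2
  have d3 := congrArg (Int.cast (R := ℝ)) d3
  have d4 := congrArg (Int.cast (R := ℝ)) d4
  have e1 := congrArg (Int.cast (R := ℝ)) e1
  have e2 := congrArg (Int.cast (R := ℝ)) e2
  have e3 := congrArg (Int.cast (R := ℝ)) e3
  have e4 := congrArg (Int.cast (R := ℝ)) e4
  push_cast at d1 d2 d3 d4 e1 e2 e3 e4
  clear ei ej ek ei' ej' ek' sumT sumH hi hj hk hi' hj' hk' hT hH t0 t1 t2 h0 h1 h2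
  refine ⟨(d, e), ?_⟩
  ext p q
  fin_cases q
  · change _ = A p 0
    rw [col0]
    clear col0 col1 col2 col3
    fin_cases p <;> simp [M, tv] <;> grind
  · change _ = A p 1
    rw [col1]
    clear col0 col1 col2 col3
    fin_cases p <;> simp [M, tv] <;> grind
  · change _ = A p 2
    rw [col2]
    clear col0 col1 col2 col3
    fin_cases p <;> simp [M, hv] <;> grind
  · change _ = A p 3
    rw [col3]
    clear col0 col1 col2 col3
    fin_cases p <;> simp [M, hv] <;> grind

end DL

/-- The subgroup of `O(4, ℝ)` consisting of the orthogonal transformations preserving both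
the triangle of twistor-line points and the hexagon of triple points is isomorphic to
`D₃ × D₆`; in particular it has order `72`. -/
theorem symmetry_group_of_discriminant_locus :
    ∃ G : Subgroup (Matrix.orthogonalGroup (Fin 4) ℝ),
      (∀ A : Matrix.orthogonalGroup (Fin 4) ℝ,
        A ∈ G ↔
          ((fun v => (A : Matrix (Fin 4) (Fin 4) ℝ).mulVec v) '' twistorTriangle =
              twistorTriangle ∧
           (fun v => (A : Matrix (Fin 4) (Fin 4) ℝ).mulVec v) '' tripleHexagon =
              tripleHexagon)) ∧
      Nonempty (G ≃* DihedralGroup 3 × DihedralGroup 6) ∧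
      Nat.card G = 72 := by
  have e := MonoidHom.ofInjective DL.φ_inj
  refine ⟨DL.φ.range, fun A => ?_, ⟨e.symm⟩, ?_⟩
  · rw [DL.T_eq, DL.H_eq]
    constructor
    · rintro ⟨x, rfl⟩
      exact ⟨DL.image_eq DL.tv DL.M_tv x, DL.image_eq DL.hv DL.M_hv x⟩
    · rintro ⟨h1, h2⟩
      obtain ⟨x, hx⟩ := DL.conv A
        (fun k => by
          obtain ⟨j, hj⟩ := h1.subset ⟨_, ⟨k, rfl⟩, rfl⟩
          exact ⟨j, hj.symm⟩)
        (fun k => by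
          obtain ⟨j, hj⟩ := h2.subset ⟨_, ⟨k, rfl⟩, rfl⟩
          exact ⟨j, hj.symm⟩)
      exact ⟨x, Subtype.ext hx⟩
  · rw [← Nat.card_congr e.toEquiv, Nat.card_prod, DihedralGroup.nat_card, DihedralGroup.nat_card]
end

section
/- Let d ≥ 1 and let f ∈ ℂ[z₁, z₂, z₃, z₄] be a homogeneous polynomial of degree d such that f(z₁, z₂, 0, 0) = 0 identically (i.e. the surface f = 0 contains the line z₃ = z₄ = 0, which is the twistor fibre over the point at infinity). Then there exists a polynomial P in four variables with complex coefficients, of total degree at most 2(d−1)², such that for every x = (x₁, x₂, x₃, x₄) ∈ ℝ⁴ one has P(x₁, x₂, x₃, x₄) = 0 if and only if the binary form F_x is degenerate. -/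
open Complex MvPolynomial

/-- The first standard point spanning the twistor fibre over `x ∈ ℝ⁴`. -/
noncomputable def twistorP₁ (x : Fin 4 → ℝ) : Fin 4 → ℂ :=
  ![(x 0 : ℂ) + (x 1 : ℂ) * Complex.I, (x 2 : ℂ) + (x 3 : ℂ) * Complex.I, 1, 0]

/-- The second standard point spanning the twistor fibre over `x ∈ ℝ⁴`. -/
noncomputable def twistorP₂ (x : Fin 4 → ℝ) : Fin 4 → ℂ :=
  ![-(x 2 : ℂ) + (x 3 : ℂ) * Complex.I, (x 0 : ℂ) - (x 1 : ℂ) * Complex.I, 0, 1]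

/-- The restriction of the surface `f = 0` to the twistor fibre over `x`, as a binary
form `F_x(λ₁, λ₂) = f(λ₁·p₁(x) + λ₂·p₂(x))` in `ℂ[λ₁, λ₂]`. -/
noncomputable def fibreForm (f : MvPolynomial (Fin 4) ℂ) (x : Fin 4 → ℝ) :
    MvPolynomial (Fin 2) ℂ :=
  MvPolynomial.aeval (fun i => C (twistorP₁ x i) * X 0 + C (twistorP₂ x i) * X 1) f


lemma natDegree_dehom_le (k : MvPolynomial (Fin 2) ℂ) :
    (MvPolynomial.aeval ![(Polynomial.X : Polynomial ℂ), 1] k).natDegree ≤ k.totalDegree := by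
  rw [MvPolynomial.aeval_def, MvPolynomial.eval₂_eq']
  refine Polynomial.natDegree_sum_le_of_forall_le _ _ fun m hm => ?_
  have h1 := MvPolynomial.le_totalDegree hm
  rw [Finsupp.sum_fintype _ _ (by simp)] at h1
  simp only [Fin.prod_univ_two, Fin.sum_univ_two] at h1 ⊢
  simp only [Matrix.cons_val_zero, Matrix.cons_val_one, one_pow, mul_one]
  refine (Polynomial.natDegree_C_mul_X_pow_le _ _).trans (by omega)

lemma squarefree_form_iff (d : ℕ) (hd : 1 ≤ d) (F : MvPolynomial (Fin 2) ℂ)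
    (hF : F.IsHomogeneous d) (g : Polynomial ℂ)
    (hg : MvPolynomial.aeval ![(Polynomial.X : Polynomial ℂ), 1] F = g) :
    Squarefree F ↔ Squarefree g ∧ d ≤ g.natDegree + 1 := by
  have hom := Polynomial.homogenize_eq_of_isHomogeneous hF hg
  have hgd : g.natDegree ≤ d := by
    rw [← hg]
    exact (natDegree_dehom_le F).trans hF.totalDegree_le
  constructor
  · intro h
    have hF0 : F ≠ 0 := h.ne_zero
    have hg0 : g ≠ 0 := by
      rintro rfl
      exact hF0 (by rw [← hom]; simp)
    constructor
    · rintro p ⟨k, hk⟩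
      have hp0 : p ≠ 0 := by rintro rfl; simp at hk; exact hg0 hk
      have hk0 : k ≠ 0 := by rintro rfl; simp at hk; exact hg0 hk
      have hdeg : g.natDegree = p.natDegree + p.natDegree + k.natDegree := by
        rw [hk, Polynomial.natDegree_mul (mul_ne_zero hp0 hp0) hk0,
          Polynomial.natDegree_mul hp0 hp0]
      obtain ⟨c, hc⟩ := Nat.exists_eq_add_of_le hgd
      have hd' : d = (p.natDegree + p.natDegree) + (k.natDegree + c) := by omega
      rw [hk, hd', Polynomial.homogenize_mul _ _ Polynomial.natDegree_mul_le (by omega),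
        Polynomial.homogenize_mul _ _ le_rfl le_rfl] at hom
      have hu := h _ ⟨_, hom.symm⟩
      have := hu.map (MvPolynomial.aeval ![(Polynomial.X : Polynomial ℂ), 1])
      rwa [Polynomial.aeval_homogenize_X_one _ le_rfl] at this
    · by_contra hlt
      have hd' : d = (1 + 1) + (d - 2) := by omega
      have e : g = (1 * 1) * g := by simp
      rw [e, hd', Polynomial.homogenize_mul _ _ (by simp) (by omega),
        Polynomial.homogenize_mul _ _ (by simp) (by simp)] at hom
      have hu := h _ ⟨_, hom.symm⟩
      have := hu.map (MvPolynomial.aeval ![(1 : ℂ), 0])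
      simp at this
  · rintro ⟨hsq, hdeg⟩ q ⟨k, hk⟩
    have hg0 : g ≠ 0 := hsq.ne_zero
    have hF0 : F ≠ 0 := by rintro rfl; simp at hg; exact hg0 hg.symm
    have hq0 : q ≠ 0 := by rintro rfl; simp at hk; exact hF0 hk
    have hk0 : k ≠ 0 := by rintro rfl; simp at hk; exact hF0 hk
    have htd := hF.totalDegree hF0
    rw [hk, MvPolynomial.totalDegree_mul_of_isDomain (mul_ne_zero hq0 hq0) hk0,
      MvPolynomial.totalDegree_mul_of_isDomain hq0 hq0] at htd
    rw [hk, map_mul, map_mul] at hg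
    have hu := hsq _ ⟨_, hg.symm⟩
    have h1 := natDegree_dehom_le k
    have h2 : g.natDegree ≤ k.totalDegree := by
      rw [← hg]
      refine Polynomial.natDegree_mul_le.trans ?_
      refine (Nat.add_le_add_right Polynomial.natDegree_mul_le _).trans ?_
      rw [Polynomial.natDegree_eq_zero_of_isUnit hu]
      omega
    have hq : q.totalDegree = 0 := by omega
    rw [MvPolynomial.totalDegree_eq_zero_iff_eq_C] at hq
    rw [hq] at hq0 ⊢
    exact (isUnit_iff_ne_zero.2 (by rintro h; simp [h] at hq0)).map MvPolynomial.C

lemma natDegree_lt_of_coeff {p : Polynomial ℂ} {m : ℕ} (hm : 0 < m) (h : p.natDegree ≤ m)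
    (h0 : p.coeff m = 0) : p.natDegree < m := by
  rcases h.lt_or_eq with h | h
  · exact h
  · rw [← h, Polynomial.coeff_natDegree, Polynomial.leadingCoeff_eq_zero] at h0
    subst h0; simpa using hm

lemma resultant_formal_eq_zero_iff (A B : Polynomial ℂ) (m : ℕ) (hm : 0 < m)
    (hA : A.natDegree ≤ m) (hB : B.natDegree ≤ m) :
    Polynomial.resultant A B m m = 0 ↔
      (A.natDegree < m ∧ B.natDegree < m) ∨ ¬ IsCoprime A B := by
  have key : ∀ A B : Polynomial ℂ, A.natDegree = m → B.natDegree ≤ m →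
      (Polynomial.resultant A B m m = 0 ↔ ¬ IsCoprime A B) := by
    intro A B hA hB
    have hA0 : A ≠ 0 := by rintro rfl; simp at hA; omega
    obtain ⟨c, hc⟩ := Nat.exists_eq_add_of_le hB
    have : Polynomial.resultant A B m m = A.coeff m ^ c * Polynomial.resultant A B := by
      conv_lhs => arg 4; rw [hc]
      rw [Polynomial.resultant_add_right_deg _ _ _ _ _ le_rfl, hA]
    rw [this, mul_eq_zero, Polynomial.resultant_eq_zero_iff]
    have : A.coeff m ^ c ≠ 0 := by
      rw [← hA]; simp [hA0]
    simp [this, hA0]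
  rcases hA.lt_or_eq with hA' | hA'
  · rcases hB.lt_or_eq with hB' | hB'
    · simp [hA', hB', Polynomial.resultant_eq_zero_of_lt_lt]
    · rw [Polynomial.resultant_comm, mul_eq_zero, key B A hB' hA, isCoprime_comm]
      simp [hB']
  · rw [key A B hA' hB]; simp [hA']

lemma resultant_disc (d : ℕ) (hd : 2 ≤ d) (g : Polynomial ℂ) (hg : g.natDegree ≤ d) :
    Polynomial.resultant (Polynomial.derivative g)
      ((d : Polynomial ℂ) * g - Polynomial.X * Polynomial.derivative g) (d - 1) (d - 1) = 0 ↔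
    ¬ (Squarefree g ∧ d ≤ g.natDegree + 1) := by
  obtain ⟨m, rfl⟩ : ∃ m, d = m + 1 := ⟨d - 1, by omega⟩
  simp only [Nat.add_sub_cancel]
  set A := Polynomial.derivative g with hAdef
  set B := ((m + 1 : ℕ) : Polynomial ℂ) * g - Polynomial.X * A with hBdef
  have hAc : ∀ k, A.coeff k = g.coeff (k + 1) * (k + 1) := fun k => Polynomial.coeff_derivative g k
  have hBc : ∀ k, B.coeff k = ((m + 1 : ℂ) - k) * g.coeff k := by
    intro k
    rw [hBdef, Polynomial.coeff_sub, ← Polynomial.C_eq_natCast, Polynomial.coeff_C_mul]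
    cases k with
    | zero => simp
    | succ k => rw [Polynomial.coeff_X_mul, hAc]; push_cast; ring
  have hA : A.natDegree ≤ m := (Polynomial.natDegree_derivative_le g).trans (by omega)
  have hB : B.natDegree ≤ m := by
    rw [Polynomial.natDegree_le_iff_coeff_eq_zero]
    intro k hk
    rw [hBc]
    rcases (show m + 1 ≤ k from hk).eq_or_lt with h | h
    · subst h; push_cast; simp
    · rw [Polynomial.coeff_eq_zero_of_natDegree_lt (by omega)]; simp
  rw [resultant_formal_eq_zero_iff A B m (by omega) hA hB, not_and_or, or_comm]
  refine or_congr (not_congr ?_) ?_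
  · rw [← PerfectField.separable_iff_squarefree, Polynomial.Separable, ← hAdef, isCoprime_comm]
    have hu : IsUnit (((m + 1 : ℕ) : Polynomial ℂ)) := by
      rw [← Polynomial.C_eq_natCast]
      exact (isUnit_iff_ne_zero.2 (by exact_mod_cast Nat.succ_ne_zero m)).map Polynomial.C
    have : B = ((m + 1 : ℕ) : Polynomial ℂ) * g + A * (-Polynomial.X) := by rw [hBdef]; ring
    rw [this, IsCoprime.add_mul_left_left_iff, isCoprime_mul_unit_left_left hu]
  · constructor
    · rintro ⟨h1, h2⟩ hle
      have e1 : g.coeff (m + 1) = 0 := by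
        have := hAc m
        rw [Polynomial.coeff_eq_zero_of_natDegree_lt h1] at this
        have h3 : (m + 1 : ℂ) ≠ 0 := by exact_mod_cast Nat.succ_ne_zero m
        simpa [h3] using this.symm
      have e2 : g.coeff m = 0 := by
        have := hBc m
        rw [Polynomial.coeff_eq_zero_of_natDegree_lt h2] at this
        simpa using this.symm
      have h3 := natDegree_lt_of_coeff (by omega) hg e1
      have h4 := natDegree_lt_of_coeff (m := m) (by omega) (by omega) e2
      omega
    · intro hle
      constructor
      · apply natDegree_lt_of_coeff (by omega) hA
        rw [hAc, Polynomial.coeff_eq_zero_of_natDegree_lt (by omega)]; simp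
      · apply natDegree_lt_of_coeff (by omega) hB
        rw [hBc, Polynomial.coeff_eq_zero_of_natDegree_lt (by omega)]; simp

/-- All coefficients have total degree at most `n`. -/
def CoeffLE (n : ℕ) (p : Polynomial (MvPolynomial (Fin 4) ℂ)) : Prop :=
  ∀ k, (p.coeff k).totalDegree ≤ n

lemma CoeffLE.mono {n m : ℕ} {p : Polynomial (MvPolynomial (Fin 4) ℂ)} (h : CoeffLE n p)
    (hnm : n ≤ m) : CoeffLE m p := fun k => (h k).trans hnm

lemma CoeffLE.add {n : ℕ} {p q : Polynomial (MvPolynomial (Fin 4) ℂ)} (h : CoeffLE n p)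
    (h' : CoeffLE n q) : CoeffLE n (p + q) := fun k => by
  rw [Polynomial.coeff_add]
  exact (MvPolynomial.totalDegree_add _ _).trans (max_le (h k) (h' k))

lemma CoeffLE.sub {n : ℕ} {p q : Polynomial (MvPolynomial (Fin 4) ℂ)} (h : CoeffLE n p)
    (h' : CoeffLE n q) : CoeffLE n (p - q) := fun k => by
  rw [Polynomial.coeff_sub]
  exact (MvPolynomial.totalDegree_sub _ _).trans (max_le (h k) (h' k))

lemma CoeffLE.mul {n m : ℕ} {p q : Polynomial (MvPolynomial (Fin 4) ℂ)} (h : CoeffLE n p)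
    (h' : CoeffLE m q) : CoeffLE (n + m) (p * q) := fun k => by
  rw [Polynomial.coeff_mul]
  refine MvPolynomial.totalDegree_finsetSum_le fun i _ => ?_
  exact (MvPolynomial.totalDegree_mul _ _).trans (add_le_add (h _) (h' _))

lemma coeffLE_C {n : ℕ} {p : MvPolynomial (Fin 4) ℂ} (h : p.totalDegree ≤ n) :
    CoeffLE n (Polynomial.C p) := fun k => by
  rw [Polynomial.coeff_C]; split_ifs <;> simp [h]

lemma coeffLE_X : CoeffLE 0 Polynomial.X := fun k => by
  rw [Polynomial.coeff_X]; split_ifs <;> simp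

lemma CoeffLE.pow {n : ℕ} {p : Polynomial (MvPolynomial (Fin 4) ℂ)} (h : CoeffLE n p) (e : ℕ) :
    CoeffLE (e * n) (p ^ e) := by
  induction e with
  | zero => simpa using coeffLE_C (n := 0) (p := 1) (by simp)
  | succ e ih => rw [pow_succ, Nat.succ_mul]; exact ih.mul h

lemma CoeffLE.sum {n : ℕ} {ι : Type*} (s : Finset ι) (p : ι → Polynomial (MvPolynomial (Fin 4) ℂ))
    (h : ∀ i ∈ s, CoeffLE n (p i)) : CoeffLE n (∑ i ∈ s, p i) := fun k => by
  rw [Polynomial.finsetSum_coeff]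
  exact MvPolynomial.totalDegree_finsetSum_le fun i hi => h i hi k

lemma CoeffLE.derivative {n : ℕ} {p : Polynomial (MvPolynomial (Fin 4) ℂ)} (h : CoeffLE n p) :
    CoeffLE n (Polynomial.derivative p) := fun k => by
  rw [Polynomial.coeff_derivative]
  refine (MvPolynomial.totalDegree_mul _ _).trans ?_
  have : ((k : MvPolynomial (Fin 4) ℂ) + 1) = MvPolynomial.C ((k : ℂ) + 1) := by simp
  rw [this, MvPolynomial.totalDegree_C]
  exact h _

lemma resultant_totalDegree {n m : ℕ} {A B : Polynomial (MvPolynomial (Fin 4) ℂ)}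
    (hA : CoeffLE n A) (hB : CoeffLE n B) :
    (Polynomial.resultant A B m m).totalDegree ≤ (m + m) * n := by
  rw [Polynomial.resultant, Matrix.det_apply]
  refine MvPolynomial.totalDegree_finsetSum_le fun σ _ => ?_
  refine (MvPolynomial.totalDegree_smul_le _ _).trans ?_
  refine (MvPolynomial.totalDegree_finsetProd _ _).trans ?_
  refine (Finset.sum_le_card_nsmul _ _ n fun i _ => ?_).trans (by simp)
  rw [Polynomial.sylvester, Matrix.of_apply]
  induction i using Fin.addCases with
  | left j => rw [Fin.addCases_left]; split_ifs <;> simp [hB _]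
  | right j => rw [Fin.addCases_right]; split_ifs <;> simp [hA _]

/-- The universal linear forms. -/
noncomputable def univQ : Fin 4 → Polynomial (MvPolynomial (Fin 4) ℂ) :=
  ![Polynomial.C (X 0 + X 1 * C Complex.I) * Polynomial.X + Polynomial.C (-X 2 + X 3 * C Complex.I),
    Polynomial.C (X 2 + X 3 * C Complex.I) * Polynomial.X + Polynomial.C (X 0 - X 1 * C Complex.I),
    Polynomial.X, 1]

/-- The universal dehomogenised form. -/
noncomputable def univG (f : MvPolynomial (Fin 4) ℂ) : Polynomial (MvPolynomial (Fin 4) ℂ) :=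
  MvPolynomial.aeval univQ f

lemma univG_map (f : MvPolynomial (Fin 4) ℂ) (x : Fin 4 → ℝ) :
    (univG f).map (MvPolynomial.eval (fun i => (x i : ℂ))) =
      MvPolynomial.aeval ![(Polynomial.X : Polynomial ℂ), 1] (fibreForm f x) := by
  have : ((Polynomial.mapAlgHom (MvPolynomial.aeval (R := ℂ) (fun i => (x i : ℂ)))).comp
      (MvPolynomial.aeval univQ)) =
      (MvPolynomial.aeval ![(Polynomial.X : Polynomial ℂ), 1]).comp
        (MvPolynomial.aeval (fun i => C (twistorP₁ x i) * X 0 + C (twistorP₂ x i) * X 1)) := by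
    apply MvPolynomial.algHom_ext
    intro i
    fin_cases i <;> simp [univQ, twistorP₁, twistorP₂, ← Polynomial.C_eq_algebraMap]
  have := congrArg (fun φ => φ f) this
  exact this

lemma fibreForm_hom (d : ℕ) (f : MvPolynomial (Fin 4) ℂ) (hf : f.IsHomogeneous d)
    (x : Fin 4 → ℝ) : (fibreForm f x).IsHomogeneous d := by
  have := hf.aeval (fun i => (C (twistorP₁ x i) * X 0 + C (twistorP₂ x i) * X 1 :
    MvPolynomial (Fin 2) ℂ)) (n := 1)
    (fun i => (isHomogeneous_C_mul_X _ _).add (isHomogeneous_C_mul_X _ _))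
  simpa [fibreForm] using this

lemma coeff_zero_of_line (f : MvPolynomial (Fin 4) ℂ)
    (hline : ∀ z₁ z₂ : ℂ, MvPolynomial.eval ![z₁, z₂, 0, 0] f = 0) (m : Fin 4 →₀ ℕ)
    (h2 : m 2 = 0) (h3 : m 3 = 0) : MvPolynomial.coeff m f = 0 := by
  have h0 : MvPolynomial.aeval (![X 0, X 1, 0, 0] : Fin 4 → MvPolynomial (Fin 4) ℂ) f = 0 := by
    apply MvPolynomial.funext
    intro z
    rw [map_zero, ← hline (z 0) (z 1), MvPolynomial.aeval_def, MvPolynomial.eval₂_eq',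
      map_sum, MvPolynomial.eval_eq' _ f]
    refine Finset.sum_congr rfl fun m _ => ?_
    simp [Fin.prod_univ_four]
  have h1 := congrArg (MvPolynomial.coeff m) h0
  rw [MvPolynomial.aeval_def, MvPolynomial.eval₂_eq', MvPolynomial.coeff_sum] at h1
  have hterm : ∀ m' : Fin 4 →₀ ℕ, MvPolynomial.coeff m (algebraMap ℂ (MvPolynomial (Fin 4) ℂ)
      (MvPolynomial.coeff m' f) *
      ∏ i, (![X 0, X 1, 0, 0] : Fin 4 → MvPolynomial (Fin 4) ℂ) i ^ m' i) =
      if m' = m then MvPolynomial.coeff m f else 0 := by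
    intro m'
    by_cases hm : m' 2 = 0 ∧ m' 3 = 0
    · have : (∏ i, (![X 0, X 1, 0, 0] : Fin 4 → MvPolynomial (Fin 4) ℂ) i ^ m' i)
          = ∏ i, X i ^ m' i := by
        simp [Fin.prod_univ_four, hm]
      rw [this, MvPolynomial.algebraMap_eq, ← Finsupp.prod_fintype m' (fun i e => (X i : MvPolynomial (Fin 4) ℂ) ^ e) (by simp),
        ← MvPolynomial.monomial_eq, MvPolynomial.coeff_monomial]
      split_ifs with h
      · rw [h]
      · rfl
    · rw [if_neg (by rintro rfl; exact hm ⟨h2, h3⟩)]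
      rw [Fin.prod_univ_four]
      rcases not_and_or.1 hm with h | h <;> simp [h]
  simp only [hterm] at h1
  rw [Finset.sum_ite_eq'] at h1
  by_contra hne
  rw [if_pos (MvPolynomial.mem_support_iff.2 hne)] at h1
  exact hne (by simpa using h1)

lemma lin_totalDegree (a b : MvPolynomial (Fin 4) ℂ) (ha : a.totalDegree ≤ 1)
    (hb : b.totalDegree ≤ 1) : CoeffLE 1 (Polynomial.C a * Polynomial.X + Polynomial.C b) :=
  ((coeffLE_C ha).mul coeffLE_X).add (coeffLE_C hb)

lemma univG_coeff (d : ℕ) (f : MvPolynomial (Fin 4) ℂ) (hf : f.IsHomogeneous d)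
    (hline : ∀ z₁ z₂ : ℂ, MvPolynomial.eval ![z₁, z₂, 0, 0] f = 0) :
    CoeffLE (d - 1) (univG f) := by
  have hX : ∀ (i : Fin 4) , (X i : MvPolynomial (Fin 4) ℂ).totalDegree ≤ 1 := fun i => by simp
  have hXI : ∀ (i : Fin 4), (X i * C Complex.I : MvPolynomial (Fin 4) ℂ).totalDegree ≤ 1 :=
    fun i => (MvPolynomial.totalDegree_mul _ _).trans (by simp)
  have hXn : ∀ (i : Fin 4) , (-X i : MvPolynomial (Fin 4) ℂ).totalDegree ≤ 1 := fun i => by simp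
  have q0 : CoeffLE 1 (univQ 0) := lin_totalDegree _ _
    ((MvPolynomial.totalDegree_add _ _).trans (max_le (hX _) (hXI _)))
    ((MvPolynomial.totalDegree_add _ _).trans (max_le (hXn _) (hXI _)))
  have q1 : CoeffLE 1 (univQ 1) := lin_totalDegree _ _
    ((MvPolynomial.totalDegree_add _ _).trans (max_le (hX _) (hXI _)))
    ((MvPolynomial.totalDegree_sub _ _).trans (max_le (hX _) (hXI _)))
  have q2 : CoeffLE 0 (univQ 2) := coeffLE_X
  have q3 : CoeffLE 0 (univQ 3) := by
    have := coeffLE_C (n := 0) (p := 1) (by simp)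
    simpa [univQ] using this
  rw [univG, MvPolynomial.aeval_def, MvPolynomial.eval₂_eq']
  refine CoeffLE.sum _ _ fun m hm => ?_
  have hc : CoeffLE 0 (algebraMap ℂ (Polynomial (MvPolynomial (Fin 4) ℂ)) (coeff m f)) :=
    coeffLE_C (p := C (coeff m f)) (by simp)
  have hcm := MvPolynomial.mem_support_iff.1 hm
  have hmd : m 0 + m 1 + m 2 + m 3 = d := by
    have := hf hcm
    rw [Finsupp.weight_apply, Finsupp.sum_fintype _ _ (by simp)] at this
    simpa [Fin.sum_univ_four] using this
  have hne : ¬ (m 2 = 0 ∧ m 3 = 0) := fun h => hcm (coeff_zero_of_line f hline m h.1 h.2)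
  rw [Fin.prod_univ_four]
  refine (hc.mul ((((q0.pow (m 0)).mul (q1.pow (m 1))).mul (q2.pow (m 2))).mul
    (q3.pow (m 3)))).mono ?_
  omega

theorem discriminant_locus_polynomial_with_line_at_infinity (d : ℕ) (hd : 1 ≤ d)
    (f : MvPolynomial (Fin 4) ℂ) (hf : f.IsHomogeneous d)
    (hline : ∀ z₁ z₂ : ℂ, MvPolynomial.eval ![z₁, z₂, 0, 0] f = 0) :
    ∃ P : MvPolynomial (Fin 4) ℂ, P.totalDegree ≤ 2 * (d - 1) ^ 2 ∧
      ∀ x : Fin 4 → ℝ,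
        (MvPolynomial.eval (fun i => (x i : ℂ)) P = 0 ↔ ¬ Squarefree (fibreForm f x)) := by
  have hG := univG_coeff d f hf hline
  have hgd : ∀ x : Fin 4 → ℝ,
      ((univG f).map (MvPolynomial.eval (fun i => (x i : ℂ)))).natDegree ≤ d := by
    intro x
    rw [univG_map]
    exact (natDegree_dehom_le _).trans (fibreForm_hom d f hf x).totalDegree_le
  have hiff := fun x : Fin 4 → ℝ => squarefree_form_iff d hd (fibreForm f x)
    (fibreForm_hom d f hf x) _ (univG_map f x).symm
  rcases hd.eq_or_lt with rfl | hd2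
  · by_cases h0 : univG f = 0
    · refine ⟨0, by simp, fun x => ?_⟩
      rw [hiff x, h0]
      simp
    · refine ⟨1, by simp, fun x => ?_⟩
      rw [hiff x]
      simp only [map_one, one_ne_zero, false_iff, not_not]
      refine ⟨?_, by omega⟩
      have hne : (univG f).map (MvPolynomial.eval (fun i => (x i : ℂ))) ≠ 0 := by
        intro hz
        apply h0
        ext1 k
        have h1 := MvPolynomial.totalDegree_eq_zero_iff_eq_C.1 (Nat.le_zero.1 (hG k))
        have h2 := congrArg (fun p => Polynomial.coeff p k) hz
        simp only [Polynomial.coeff_map, Polynomial.coeff_zero] at h2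
        rw [h1, MvPolynomial.eval_C] at h2
        rw [h1, h2]; simp
      rintro q ⟨k, hk⟩
      have hdeg := hgd x
      rw [hk] at hdeg hne
      have hqq := left_ne_zero_of_mul hne
      have hq := left_ne_zero_of_mul hqq
      rw [Polynomial.natDegree_mul hqq (right_ne_zero_of_mul hne),
        Polynomial.natDegree_mul hq hq] at hdeg
      rw [Polynomial.isUnit_iff_degree_eq_zero, Polynomial.degree_eq_natDegree hq]
      have : q.natDegree = 0 := by omega
      rw [this]; rfl
  · refine ⟨Polynomial.resultant (Polynomial.derivative (univG f))
      ((d : Polynomial (MvPolynomial (Fin 4) ℂ)) * univG f -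
        Polynomial.X * Polynomial.derivative (univG f)) (d - 1) (d - 1), ?_, fun x => ?_⟩
    · refine (resultant_totalDegree (n := d - 1) hG.derivative (CoeffLE.sub ?_ ?_)).trans
        (le_of_eq (by ring))
      · have : CoeffLE 0 (d : Polynomial (MvPolynomial (Fin 4) ℂ)) := by
          have := coeffLE_C (n := 0) (p := C (d : ℂ)) (by rw [totalDegree_C])
          simpa using this
        simpa using this.mul hG
      · simpa using coeffLE_X.mul hG.derivative
    · rw [hiff x, ← resultant_disc d hd2 _ (hgd x)]
      have h := Polynomial.resultant_map_map (Polynomial.derivative (univG f))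
        ((d : Polynomial (MvPolynomial (Fin 4) ℂ)) * univG f -
          Polynomial.X * Polynomial.derivative (univG f)) (d - 1) (d - 1)
        (MvPolynomial.eval (fun i => (x i : ℂ)))
      rw [← h, Polynomial.map_sub, Polynomial.map_mul, Polynomial.map_mul,
        Polynomial.map_natCast, Polynomial.map_X, ← Polynomial.derivative_map]
end
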